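/- arXiv:1503.00637 — 9 statements merged into one kernel-verified Lean document; each statement's English description precedes it below -/
import Mathlib

section
/- Let P, Q, D ∈ ℂ[X] with deg(D) = 2 and deg(P) = d ≥ 1. Then the identity P² − D·Q² = 1 holds if and only if there exist constants λ, μ ∈ ℂ \ {0}, ν ∈ ℂ and a sign ε ∈ {1, −1} such that P = ε·T_d(λX + ν), Q = μ·U_{d−1}(λX + ν), and D = μ⁻²·((λX + ν)² − 1), where T_d and U_{d−1} are the Chebyshev polynomials of the first and second kind. -/
/-!
The Pell equation `P² - (X² - 1) R² = 1` over `ℂ[X]` is solved by descent. Multiplying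
`P + R √(X² - 1)` by `X ∓ √(X² - 1)` gives new solutions with first components
`P₁, P₂ = X P ∓ (X² - 1) R`. Their sum `2 X P` has degree `deg P + 1`, while their product
`P² + X² - 1` has degree at most `2 deg P` (for `deg P ≥ 1`), so one of them has degree smaller
than `deg P`. Hence every solution is `± (X + √(X² - 1)) ^ n` for some `n : ℤ`, that is
`P = ± T n` and `R = ± U (n - 1)` (`pell_solution`); integer indices absorb the sign of `R`.

A general `D` of degree two reduces to `X² - 1` by completing the square. This needs the
discriminant to be nonzero: otherwise `D` is a square, `P² - D Q²` factors, and both factors, being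
units, are constant, so `P` is constant.
-/

open Polynomial Polynomial.Chebyshev

theorem pell_T_U (n : ℤ) :
    (Chebyshev.T ℂ n) ^ 2 - (X ^ 2 - 1) * (Chebyshev.U ℂ (n - 1)) ^ 2 = 1 := by
  have h := congrArg (fun p => p.comp (2 * X)) (S_sq_add_S_sq ℂ (n - 1))
  simp only [sub_comp, add_comp, mul_comp, pow_comp, S_comp_two_mul_X, X_comp, one_comp,
    sub_add_cancel] at h
  rw [T_eq_U_sub_X_mul_U]
  linear_combination h

theorem T_succ_eq (n : ℤ) : Chebyshev.T ℂ (n + 1) =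
    X * Chebyshev.T ℂ n + (X ^ 2 - 1) * Chebyshev.U ℂ (n - 1) := by
  have h := T_eq_X_mul_T_sub_pol_U ℂ (n - 1)
  rw [show n - 1 + 2 = n + 1 by ring, sub_add_cancel] at h
  linear_combination h

/-- If `A + B = 2 X P` and `A B = P² + X² - 1` with `P` nonconstant, then one of `A`, `B` has
degree smaller than `P`. -/
theorem descent_degree (P A B : ℂ[X]) (hP : 1 ≤ P.natDegree) (hs : A + B = 2 * X * P)
    (hm : A * B = P ^ 2 + X ^ 2 - 1) :
    A.natDegree < P.natDegree ∨ B.natDegree < P.natDegree := by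
  by_contra! hc
  have hP0 : P ≠ 0 := by rintro rfl; simp at hP
  have hA0 : A ≠ 0 := by rintro rfl; simp at hc; omega
  have hB0 : B ≠ 0 := by rintro rfl; simp at hc; omega
  have h1 : (A + B).natDegree = P.natDegree + 1 := by
    rw [hs, show (2 : ℂ[X]) * X * P = C 2 * (P * X) by rw [C_ofNat]; ring,
      natDegree_C_mul two_ne_zero, natDegree_mul_X hP0]
  have h2 := natDegree_add_le A B
  have h3 : (A * B).natDegree ≤ 2 * P.natDegree := by
    rw [hm]
    refine (natDegree_sub_le _ _).trans (max_le ((natDegree_add_le _ _).trans (max_le ?_ ?_)) ?_)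
    · exact natDegree_pow_le
    · simp; omega
    · simp
  rw [natDegree_mul hA0 hB0] at h3
  rcases le_max_iff.1 (h1 ▸ h2) with h | h <;> omega

/-- Every solution of the Pell equation `P² - (X² - 1) R² = 1` is, up to a common sign,
`(T n, U (n - 1))` for an integer `n` of either sign. -/
theorem pell_solution (N : ℕ) : ∀ P R : ℂ[X], P.natDegree ≤ N →
    P ^ 2 - (X ^ 2 - 1) * R ^ 2 = 1 → ∃ (n : ℤ) (e : ℂ), (e = 1 ∨ e = -1) ∧
      P = C e * Chebyshev.T ℂ n ∧ R = C e * Chebyshev.U ℂ (n - 1) := by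
  induction N with
  | zero =>
    intro P R hP h
    obtain ⟨p, rfl⟩ : ∃ p, P = C p := ⟨_, eq_C_of_natDegree_le_zero hP⟩
    have hX : (X ^ 2 - 1 : ℂ[X]).natDegree = 2 := by
      simpa using natDegree_X_pow_sub_C (n := 2) (r := (1 : ℂ))
    have hX0 : (X ^ 2 - 1 : ℂ[X]) ≠ 0 := by intro h0; simp [h0] at hX
    have hR : R = 0 := by
      by_contra hR
      have h1 : (X ^ 2 - 1) * R ^ 2 = C (p ^ 2 - 1) := by
        simp only [C_sub, C_pow, C_1]; linear_combination -h
      have h2 := congrArg natDegree h1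
      rw [natDegree_mul hX0 (pow_ne_zero 2 hR), hX, natDegree_C] at h2
      omega
    subst hR
    refine ⟨0, p, ?_, by simp, by simp⟩
    have h1 : C (p ^ 2) = (C 1 : ℂ[X]) := by simpa using h
    simpa using C_injective h1
  | succ N ih =>
    intro P R hP h
    rcases Nat.eq_zero_or_pos P.natDegree with h0 | h0
    · exact ih P R (by omega) h
    -- The pairs obtained by multiplying `P + R √(X² - 1)` by `X ∓ √(X² - 1)` are again solutions;
    -- the one of smaller degree is covered by the induction hypothesis.
    rcases descent_degree P (X * P - (X ^ 2 - 1) * R) (X * P + (X ^ 2 - 1) * R) h0 (by ring)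
      (by linear_combination (X ^ 2 - 1) * h) with hd | hd
    · obtain ⟨n, e, he, h1, h2⟩ := ih _ (X * R - P) (Nat.lt_succ_iff.1 (hd.trans_le hP))
        (by linear_combination h)
      refine ⟨n + 1, e, he, ?_, ?_⟩
      · rw [T_succ_eq]
        linear_combination X * h1 + (X ^ 2 - 1) * h2
      · have h3 := U_eq_X_mul_U_add_T ℂ (n - 1)
        rw [sub_add_cancel] at h3
        rw [add_sub_cancel_right, h3]
        linear_combination h1 + X * h2
    · obtain ⟨n, e, he, h1, h2⟩ := ih _ (X * R + P) (Nat.lt_succ_iff.1 (hd.trans_le hP))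
        (by linear_combination h)
      refine ⟨n - 1, e, he, ?_, ?_⟩
      · have h3 := T_succ_eq n
        have h4 := T_sub_one ℂ n
        rw [h4, h3]
        linear_combination X * h1 - (X ^ 2 - 1) * h2
      · have h3 := U_eq_X_mul_U_add_T ℂ (n - 1)
        have h4 := U_sub_one ℂ (n - 1)
        rw [sub_add_cancel] at h3 h4
        rw [h4, h3]
        linear_combination X * h2 - h1

/-- The form of `pell_solution` with a natural index; the signs of `P` and `R` become
independent. -/
theorem pell_solution_nat (P R : ℂ[X]) (d : ℕ) (hP : P.natDegree = d)
    (h : P ^ 2 - (X ^ 2 - 1) * R ^ 2 = 1) : ∃ e f : ℂ, (e = 1 ∨ e = -1) ∧ (f = 1 ∨ f = -1) ∧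
      P = C e * Chebyshev.T ℂ d ∧ R = C f * Chebyshev.U ℂ ((d : ℤ) - 1) := by
  obtain ⟨n, e, he, h1, h2⟩ := pell_solution d P R hP.le h
  have he0 : e ≠ 0 := by rcases he with rfl | rfl <;> simp
  have hn : n.natAbs = d := by
    rw [← hP, h1, natDegree_C_mul he0, natDegree_T]
  rcases Int.natAbs_eq n with h3 | h3 <;> rw [hn] at h3 <;> subst h3
  · exact ⟨e, e, he, he, h1, h2⟩
  · refine ⟨e, -e, he, ?_, ?_, ?_⟩
    · rcases he with rfl | rfl <;> simp
    · rw [h1, T_neg]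
    · rw [h2, U_neg_sub_one]; simp

theorem natDegree_eq_zero_of_sq_sub_sq (P S : ℂ[X]) (h : P ^ 2 - S ^ 2 = 1) :
    P.natDegree = 0 := by
  have h1 : (P - S) * (P + S) = 1 := by linear_combination h
  have h2 := natDegree_eq_zero_of_isUnit (IsUnit.of_mul_eq_one _ h1)
  have h3 := natDegree_eq_zero_of_isUnit (IsUnit.of_mul_eq_one_right _ h1)
  have h4 : (C 2 * P).natDegree ≤ 0 := by
    rw [show C 2 * P = (P - S) + (P + S) by rw [C_ofNat]; ring]
    exact (natDegree_add_le _ _).trans (by simp [h2, h3])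
  rw [natDegree_C_mul two_ne_zero] at h4
  omega

/-- Completing the square: a complex quadratic polynomial is a square or of the form
`m⁻² ((l X + v)² - 1)`. -/
theorem quadratic_normal_form (D : ℂ[X]) (hD : D.natDegree = 2) :
    (∃ S, D = S ^ 2) ∨ ∃ l m v : ℂ, l ≠ 0 ∧ m ≠ 0 ∧
      D = C (m⁻¹ ^ 2) * ((C l * X + C v) ^ 2 - 1) := by
  obtain ⟨a, b, c, ha, rfl⟩ : ∃ a b c : ℂ, a ≠ 0 ∧ D = C a * X ^ 2 + C b * X + C c := by
    refine ⟨D.coeff 2, D.coeff 1, D.coeff 0, ?_, ?_⟩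
    · rw [← hD, coeff_natDegree, Ne, leadingCoeff_eq_zero]
      rintro rfl
      simp at hD
    · exact eq_quadratic_of_degree_le_two (natDegree_le_iff_degree_le.1 hD.le)
  obtain ⟨t, ht⟩ := IsAlgClosed.exists_pow_nat_eq a (n := 2) (by norm_num)
  obtain ⟨s, hs⟩ := IsAlgClosed.exists_pow_nat_eq (b ^ 2 - 4 * a * c) (n := 2) (by norm_num)
  have ht0 : t ≠ 0 := by rintro rfl; simp at ht; exact ha ht.symm
  subst ht
  rcases eq_or_ne s 0 with rfl | hs0
  · left
    refine ⟨C t * X + C (b / (2 * t)), ?_⟩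
    have hb : b = 2 * t * (b / (2 * t)) := by field_simp
    have hc : c = (b / (2 * t)) ^ 2 := by field_simp; linear_combination hs
    generalize b / (2 * t) = w at hb hc
    subst hb hc
    simp only [Polynomial.C_mul, C_pow, C_ofNat]
    ring
  · right
    refine ⟨2 * t ^ 2 / s, 2 * t / s, b / s, by simp [ht0, hs0], by simp [ht0, hs0], ?_⟩
    have e1 : t ^ 2 = ((2 * t / s)⁻¹) ^ 2 * (2 * t ^ 2 / s) ^ 2 := by field_simp
    have e2 : b = ((2 * t / s)⁻¹) ^ 2 * (2 * (2 * t ^ 2 / s) * (b / s)) := by field_simp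
    have e3 : c = ((2 * t / s)⁻¹) ^ 2 * ((b / s) ^ 2 - 1) := by
      field_simp; linear_combination hs
    generalize 2 * t / s = m at *
    generalize 2 * t ^ 2 / s = l at *
    generalize b / s = v at *
    rw [e1, e2, e3]
    simp only [Polynomial.C_mul, C_pow, C_ofNat, C_sub, C_1]
    ring

theorem stmt_0 (P Q D : ℂ[X]) (d : ℕ) (hd : 1 ≤ d)
    (hD : D.natDegree = 2) (hP : P.natDegree = d) :
    P ^ 2 - D * Q ^ 2 = 1 ↔
      ∃ (l m v e : ℂ), l ≠ 0 ∧ m ≠ 0 ∧ (e = 1 ∨ e = -1) ∧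
        P = C e * (Chebyshev.T ℂ d).comp (C l * X + C v) ∧
        Q = C m * (Chebyshev.U ℂ ((d : ℤ) - 1)).comp (C l * X + C v) ∧
        D = C (m⁻¹ ^ 2) * ((C l * X + C v) ^ 2 - 1) := by
  constructor
  · intro h
    rcases quadratic_normal_form D hD with ⟨S, rfl⟩ | ⟨l, m, v, hl, hm, rfl⟩
    · have := natDegree_eq_zero_of_sq_sub_sq P (S * Q) (by linear_combination h)
      omega
    -- `W` is the compositional inverse of `l X + v`.
    obtain ⟨W, hW⟩ : ∃ W : ℂ[X], W = C l⁻¹ * X + C (-(l⁻¹ * v)) := ⟨_, rfl⟩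
    have hll : C l * C l⁻¹ = (1 : ℂ[X]) := by rw [← Polynomial.C_mul, mul_inv_cancel₀ hl, C_1]
    have hYW : (C l * X + C v).comp W = X := by
      simp only [hW, add_comp, mul_comp, C_comp, X_comp, Polynomial.C_neg, Polynomial.C_mul]
      linear_combination (X - C v) * hll
    have hWY : W.comp (C l * X + C v) = X := by
      simp only [hW, add_comp, mul_comp, C_comp, X_comp, neg_comp, Polynomial.C_neg, Polynomial.C_mul]
      linear_combination X * hll
    have hWd : W.natDegree = 1 := by
      rw [hW]; exact natDegree_linear (inv_ne_zero hl)
    have hpell : (P.comp W) ^ 2 - (X ^ 2 - 1) * (C m⁻¹ * Q.comp W) ^ 2 = 1 := by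
      have h1 := congrArg (fun p => p.comp W) h
      simp only [sub_comp, mul_comp, pow_comp, C_comp, one_comp, hYW] at h1
      rw [C_pow] at h1
      linear_combination h1
    obtain ⟨e, f, he, hf, h1, h2⟩ := pell_solution_nat _ _ d
      (by rw [natDegree_comp, hWd, hP, mul_one]) hpell
    have hf0 : f ≠ 0 := by rcases hf with rfl | rfl <;> simp
    have hff : f⁻¹ ^ 2 = 1 := by rcases hf with rfl | rfl <;> norm_num
    refine ⟨l, m * f, v, e, hl, mul_ne_zero hm hf0, he, ?_, ?_, ?_⟩
    · have h3 := congrArg (fun p => p.comp (C l * X + C v)) h1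
      simpa only [comp_assoc, hWY, comp_X, mul_comp, C_comp] using h3
    · have h3 := congrArg (fun p => p.comp (C l * X + C v)) h2
      simp only [comp_assoc, hWY, comp_X, mul_comp, C_comp] at h3
      have hmm : C m * C m⁻¹ = (1 : ℂ[X]) := by rw [← Polynomial.C_mul, mul_inv_cancel₀ hm, C_1]
      rw [Polynomial.C_mul]
      linear_combination C m * h3 - Q * hmm
    · rw [mul_inv, mul_pow, hff, mul_one]
  · rintro ⟨l, m, v, e, hl, hm, he, rfl, rfl, rfl⟩
    have h1 := congrArg (fun p => p.comp (C l * X + C v)) (pell_T_U d)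
    simp only [sub_comp, mul_comp, pow_comp, X_comp, one_comp] at h1
    have hmm : C m⁻¹ * C m = (1 : ℂ[X]) := by rw [← Polynomial.C_mul, inv_mul_cancel₀ hm, C_1]
    have hee : (C e) ^ 2 = (1 : ℂ[X]) := by rcases he with rfl | rfl <;> simp
    rw [mul_pow, mul_pow, hee, C_pow, one_mul]
    generalize (Chebyshev.U ℂ ((d : ℤ) - 1)).comp (C l * X + C v) = u at *
    linear_combination h1 + (-((C l * X + C v) ^ 2 - 1) * u ^ 2 * (C m⁻¹ * C m + 1)) * hmm
end

section
/- Let P, Q, D ∈ ℂ[X] with deg(D) = 2, deg(P) = d ≥ 1, and P² − D·Q² = 1. Then each of the polynomials P, Q, and D is separable (i.e., has no repeated roots; equivalently, is squarefree). -/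
/-!
Differentiating `P ^ 2 - D * Q ^ 2 = 1` gives `2 P P' = Q (D' Q + 2 D Q')`. Since `Q` is coprime
to `P`, it divides `P'`; as `deg Q = d - 1 = deg P'`, in fact `P' = c Q` for a nonzero constant `c`.
Cancelling `Q` leaves `2 c P = D' Q + 2 D Q'`. Substituting these two identities into the original
equation exhibits `1` as a combination of `P, P'`, of `Q, Q'`, and of `D, D'`.
-/

open Polynomial

theorem stmt_1 (P Q D : ℂ[X]) (d : ℕ) (hd : 1 ≤ d)
    (hD : D.natDegree = 2) (hP : P.natDegree = d)
    (h : P ^ 2 - D * Q ^ 2 = 1) :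
    P.Separable ∧ Q.Separable ∧ D.Separable := by
  have hD0 : D ≠ 0 := by
    rintro rfl
    simp at hD
  have hQ0 : Q ≠ 0 := by
    rintro rfl
    have h1 := congrArg natDegree h
    simp [natDegree_pow] at h1
    omega
  have hdeg : Q.natDegree + 1 = d := by
    have h1 : P ^ 2 - C 1 = D * Q ^ 2 := by
      rw [C_1]
      linear_combination h
    have h2 := congrArg natDegree h1
    rw [natDegree_sub_C, natDegree_pow, natDegree_mul hD0 (pow_ne_zero 2 hQ0), natDegree_pow,
      hD, hP] at h2
    omega
  have hder : 2 * P * derivative P = Q * (derivative D * Q + 2 * D * derivative Q) := by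
    have h1 := congrArg derivative h
    simp only [derivative_sub, derivative_mul, derivative_pow, derivative_one, Nat.cast_ofNat,
      map_ofNat, Nat.add_one_sub_one, pow_one] at h1
    linear_combination h1
  have hcop : IsCoprime Q P := ⟨-(D * Q), P, by linear_combination h⟩
  have hdvd : Q ∣ derivative P := by
    refine hcop.dvd_of_dvd_mul_left ⟨C (1 / 2) * (derivative D * Q + 2 * D * derivative Q), ?_⟩
    have h2 : (C (1 / 2) * 2 : ℂ[X]) = 1 := by
      rw [← C_ofNat, ← C_mul]
      norm_num
    linear_combination C (1 / 2) * hder - P * derivative P * h2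
  obtain ⟨R, hR⟩ := hdvd
  have hdP : (derivative P).natDegree = d - 1 := by rw [natDegree_derivative, hP]
  have hR0 : R ≠ 0 := by
    rintro rfl
    have h1 : derivative P = 0 := by simpa using hR
    have := natDegree_eq_zero_of_derivative_eq_zero h1
    omega
  obtain ⟨c, rfl⟩ : ∃ c, C c = R := by
    rw [← natDegree_eq_zero]
    rw [hR, natDegree_mul hQ0 hR0] at hdP
    omega
  have hc : c ≠ 0 := by simpa using hR0
  have hrel : 2 * C c * P = derivative D * Q + 2 * D * derivative Q := by
    apply mul_left_cancel₀ hQ0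
    rw [← hder, hR]
    ring
  -- `C k` is the inverse of `2 c`, with which the last relation is solved for `P`.
  obtain ⟨k, hk⟩ : ∃ k : ℂ, C k * (2 * C c) = 1 := ⟨(2 * c)⁻¹, by
    rw [← C_ofNat, ← C_mul, ← C_mul, inv_mul_cancel₀ (by simpa using hc), C_1]⟩
  have hPk : P = C k * (derivative D * Q + 2 * D * derivative Q) := by
    linear_combination C k * hrel - P * hk
  refine ⟨⟨P, -(2 * C k * D * Q), ?_⟩, ⟨P * C k * derivative D - D * Q, 2 * P * C k * D, ?_⟩,
    ⟨2 * P * C k * derivative Q - Q ^ 2, P * C k * Q, ?_⟩⟩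
  · rw [hR]
    linear_combination h - D * Q ^ 2 * hk
  · linear_combination h - P * hPk
  · linear_combination h - P * hPk
end

section
/- Let n be a positive integer which is not a perfect square, and let (a, b) be a solution in integers of the Pell equation x² − n·y² = 1 with b ≠ 0. Let P, Q, D ∈ ℤ[X] with deg(P) = 1 and deg(D) = 2. Then the following are equivalent: (1) P² − D·Q² = 1, P(0) = a, Q(0) = b and D(0) = n; (2) setting c = 1 if b is odd and c = 2 if b is even, there exists a nonzero integer m such that c divides m·b² and c² divides 2·m·a·b, and P = P₀((m/c)·X), Q = b and D = D₀((m/c)·X), where P₀ = b²·X + a and D₀ = b²·X² + 2a·X + n. -/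
/-!
Comparing degrees in `P ^ 2 - 1 = D * Q ^ 2` forces `Q` to be the constant `b`. Writing
`P = p X + a` and `D = d X ^ 2 + e X + n`, the equation says `p ^ 2 = d * b ^ 2` and
`2 * a * p = e * b ^ 2`. The first gives `p = b * k`, and then the second gives `2 * a * k = e * b`,
so `b ∣ 2 * k` because the Pell relation makes `a` and `b` coprime. Hence `k = b * (m / c)`, with
`c = 1` allowed when `b` is odd and `c = 2` when `b` is even, which determines `P` and `D`
(`pell_coeff`). The converse is the identity
`(b ^ 2 * Y + a) ^ 2 - (b ^ 2 * Y ^ 2 + 2 * a * Y + n) * b ^ 2 = a ^ 2 - n * b ^ 2`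
at `Y = (m / c) * X`.
-/

open Polynomial

/-- The arithmetic of the coefficients: a solution `p X + a`, `d X ^ 2 + e X + n` of the polynomial
Pell equation with constant second component `b` is obtained from `b ^ 2 * X + a`,
`b ^ 2 * X ^ 2 + 2 * a * X + n` by scaling `X` by `m / c`. All divisions are cleared. -/
lemma pell_coeff (n a b p d e : ℤ) (hab : a ^ 2 - n * b ^ 2 = 1) (hb : b ≠ 0)
    (h2 : p ^ 2 = d * b ^ 2) (h1 : 2 * a * p = e * b ^ 2) (c : ℤ)
    (hc : c = if Odd b then 1 else 2) :
    ∃ m : ℤ, c ∣ m * b ^ 2 ∧ c ^ 2 ∣ 2 * m * a * b ∧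
      c * p = b ^ 2 * m ∧ c ^ 2 * d = b ^ 2 * m ^ 2 ∧ c * e = 2 * a * m := by
  obtain ⟨k, rfl⟩ : b ∣ p := (Int.pow_dvd_pow_iff two_ne_zero).1 ⟨d, by rw [h2]; ring⟩
  have hd : d = k ^ 2 := mul_right_cancel₀ (pow_ne_zero 2 hb) (by linear_combination -h2)
  have he : 2 * a * k = e * b := mul_right_cancel₀ hb (by linear_combination h1)
  have hcop : IsCoprime b a := ⟨-(n * b), a, by linear_combination hab⟩
  have hbk : b ∣ 2 * k := hcop.dvd_of_dvd_mul_left ⟨e, by linear_combination he⟩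
  by_cases hodd : Odd b
  · rw [if_pos hodd] at hc
    have h2b : IsCoprime b 2 := by
      obtain ⟨r, hr⟩ := hodd
      exact ⟨1, -r, by rw [hr]; ring⟩
    obtain ⟨m, rfl⟩ := h2b.dvd_of_dvd_mul_left hbk
    subst hc hd
    refine ⟨m, by simp, by simp, by ring, by ring, ?_⟩
    exact mul_right_cancel₀ hb (by linear_combination -he)
  · rw [if_neg hodd] at hc
    obtain ⟨m, hm⟩ := hbk
    subst hc hd
    have hev : (2 : ℤ) ∣ b := (Int.not_odd_iff_even.1 hodd).two_dvd
    refine ⟨m, ?_, ?_, by linear_combination b * hm,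
      by linear_combination (2 * k + b * m) * hm, ?_⟩
    · exact (dvd_pow hev two_ne_zero).mul_left m
    · obtain ⟨r, rfl⟩ := hev
      exact ⟨m * a * r, by ring⟩
    · exact mul_right_cancel₀ hb (by linear_combination -2 * he + 2 * a * hm)

/-- Degree comparison: the leading terms of `P ^ 2` and `D * Q ^ 2` have to cancel. -/
lemma natDegree_eq_zero_of_pell (P Q D : ℤ[X]) (hP : P.natDegree = 1) (hD : D.natDegree = 2)
    (hQ : Q ≠ 0) (h : P ^ 2 - D * Q ^ 2 = 1) : Q.natDegree = 0 := by
  have hD0 : D ≠ 0 := by rintro rfl; simp at hD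
  have h' : D * Q ^ 2 = P ^ 2 - C 1 := by rw [C_1]; linear_combination -h
  have hdeg := congrArg natDegree h'
  rw [natDegree_mul hD0 (pow_ne_zero 2 hQ), natDegree_pow, natDegree_sub_C, natDegree_pow,
    hP, hD] at hdeg
  omega

theorem stmt_3 (n : ℕ) (hn : 0 < n) (hns : ¬ IsSquare n)
    (a b : ℤ) (hab : a ^ 2 - (n : ℤ) * b ^ 2 = 1) (hb : b ≠ 0)
    (P Q D : ℤ[X]) (hP : P.natDegree = 1) (hD : D.natDegree = 2) :
    (P ^ 2 - D * Q ^ 2 = 1 ∧ P.eval 0 = a ∧ Q.eval 0 = b ∧ D.eval 0 = (n : ℤ)) ↔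
      (∃ m : ℤ, m ≠ 0 ∧
        (let c : ℤ := if Odd b then 1 else 2;
          c ∣ m * b ^ 2 ∧ c ^ 2 ∣ 2 * m * a * b ∧
          P.map (Int.castRingHom ℚ) =
            ((C ((b : ℚ) ^ 2) * X + C (a : ℚ)).comp (C ((m : ℚ) / (c : ℚ)) * X)) ∧
          Q = C b ∧
          D.map (Int.castRingHom ℚ) =
            ((C ((b : ℚ) ^ 2) * X ^ 2 + C (2 * (a : ℚ)) * X + C (n : ℚ)).comp
              (C ((m : ℚ) / (c : ℚ)) * X)))) := by
  have hc0 : ((if Odd b then 1 else 2 : ℤ) : ℚ) ≠ 0 := by split_ifs <;> norm_num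
  have hinj : Function.Injective (Polynomial.map (Int.castRingHom ℚ)) :=
    map_injective _ Int.cast_injective
  generalize hc : (if Odd b then 1 else 2 : ℤ) = c at hc0
  dsimp only
  constructor
  · rintro ⟨h, hPa, hQb, hDn⟩
    have hQ : Q.natDegree = 0 := by
      refine natDegree_eq_zero_of_pell P Q D hP hD ?_ h
      rintro rfl
      exact hb (by simpa using hQb.symm)
    obtain ⟨q, rfl⟩ := natDegree_eq_zero.1 hQ
    obtain ⟨p, a', rfl⟩ := exists_eq_X_add_C_of_natDegree_le_one hP.le
    have hDq := eq_quadratic_of_degree_le_two (natDegree_le_iff_degree_le.1 hD.le)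
    generalize D.coeff 2 = d at hDq
    generalize D.coeff 1 = e at hDq
    generalize D.coeff 0 = n' at hDq
    subst hDq
    simp only [eval_add, eval_mul, eval_C, eval_X, eval_pow] at hPa hQb hDn
    obtain rfl : a' = a := by linear_combination hPa
    obtain rfl : n' = n := by linear_combination hDn
    subst hQb
    -- Evaluating at `1` and `-1` separates the coefficients of `X ^ 2` and `X`.
    have e1 := congrArg (eval 1) h
    have e2 := congrArg (eval (-1)) h
    simp only [eval_add, eval_sub, eval_mul, eval_C, eval_X, eval_pow, eval_one] at e1 e2
    obtain ⟨m, hm1, hm2, hp, hd, he⟩ := pell_coeff n a' q p d e hab hb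
      (by linarith) (by linarith) c hc.symm
    have hp' : (p : ℚ) = q ^ 2 * (m / c) := by
      field_simp
      exact_mod_cast (mul_comm p c).trans hp
    have hd' : (d : ℚ) = q ^ 2 * (m / c) ^ 2 := by
      field_simp
      exact_mod_cast (mul_comm d _).trans hd
    have he' : (e : ℚ) = 2 * a' * (m / c) := by
      field_simp
      exact_mod_cast (mul_comm e c).trans he
    refine ⟨m, ?_, hm1, hm2, ?_, rfl, ?_⟩
    · rintro rfl
      obtain rfl : p = 0 := by simpa using hp'
      simp at hP
    · simp only [Polynomial.map_add, Polynomial.map_mul, Polynomial.map_pow, map_C, map_X, add_comp,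
        mul_comp, pow_comp, C_comp, X_comp, eq_intCast (Int.castRingHom ℚ), hp', C_mul, C_pow,
        Int.cast_natCast]
      ring
    · simp only [Polynomial.map_add, Polynomial.map_mul, Polynomial.map_pow, map_C, map_X, add_comp,
        mul_comp, pow_comp, C_comp, X_comp, eq_intCast (Int.castRingHom ℚ), hd', he', C_mul, C_pow,
        Int.cast_natCast]
      ring
  · rintro ⟨m, -, -, -, hPm, rfl, hDm⟩
    refine ⟨hinj ?_, ?_, by simp, ?_⟩
    · have hab' : (C (a : ℚ)) ^ 2 - C (n : ℚ) * C (b : ℚ) ^ 2 = 1 := by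
        rw [← C_pow, ← C_pow, ← C_mul, ← C_sub, ← C_1]
        exact congrArg C (by exact_mod_cast hab)
      simp only [Polynomial.map_sub, Polynomial.map_mul, Polynomial.map_pow, hPm, hDm, map_C,
        Polynomial.map_one, add_comp, mul_comp, C_comp, X_comp, pow_comp, C_mul, C_pow,
        eq_intCast (Int.castRingHom ℚ)]
      have h2 : (C (2 : ℚ)) = 2 := rfl
      rw [h2]
      linear_combination hab'
    · have := congrArg (eval 0) hPm
      rw [eval_zero_map] at this
      simpa using this
    · have := congrArg (eval 0) hDm
      rw [eval_zero_map] at this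
      simp at this
      exact_mod_cast this
end

section
/- Let n be a positive integer which is not a perfect square, and let (a, b) be a solution in integers of the Pell equation x² − n·y² = 1 with b ≠ 0. Let P, Q, D ∈ ℤ[X] with deg(P) = deg(D) = 2. Then the following are equivalent: (1) P² − D·Q² = 1, P(0) = a, Q(0) = b and D(0) = n; (2) there exist a nonzero integer m and ε ∈ {1, −1} such that, setting c = gcd(b³, (a+ε)·b, 2·(a+ε)²), one has P = P₀((m/c)·X), Q = Q₀((m/c)·X) and D = D₀((m/c)·X), where P₀ = b⁴·(a+ε)·X² + 2b²·(a+ε)·X + a, Q₀ = b³·X + b, and D₀ = (a+ε)²·b²·X² + 2·(a+ε)²·X + n. -/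
/-!
The equation reads `(P - 1) * (P + 1) = D * Q ^ 2`, and comparing degrees shows that `Q` is linear.
At the root of `Q` the polynomial `P` takes a value `-e = ±1`, and `P ^ 2 - 1` vanishes there to
second order, hence so does `P + e`. Therefore `P + e = k * Q ^ 2` with `k = (a + e) / b ^ 2`, and
`D = k ^ 2 * Q ^ 2 - 2 * e * k`: everything is determined by `e` and the leading coefficient `q`
of `Q`, and `P`, `Q`, `D` are `P₀`, `Q₀`, `D₀` rescaled by `r = q / b ^ 3` (`coeff_solution`).

For integrality, `r * b ^ 3` and `r * (2 * (a + e) ^ 2)` are coefficients of `Q` and `D`, while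
`(r * ((a + e) * b)) ^ 2` is the leading coefficient of `D`, so `r * ((a + e) * b)` is an integer
too. By Bézout `r * c` is an integer (`exists_scaling`).

The converse is the polynomial identity `P₀ ^ 2 - D₀ * Q₀ ^ 2 = 1`.
-/

open Polynomial

/-- The polynomial equation for `P = p2 X² + p1 X + a`, `Q = q X + b`, `D = d2 X² + d1 X + n`,
in terms of coefficients. -/
lemma coeff_equations {p2 p1 a q b d2 d1 n : ℤ}
    (h : (C p2 * X ^ 2 + C p1 * X + C a : ℤ[X]) ^ 2
      - (C d2 * X ^ 2 + C d1 * X + C n) * (C q * X + C b) ^ 2 = 1) :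
    p2 ^ 2 - d2 * q ^ 2 = 0 ∧
    2 * p1 * p2 - d1 * q ^ 2 - 2 * d2 * q * b = 0 ∧
    p1 ^ 2 + 2 * a * p2 - d2 * b ^ 2 - 2 * d1 * q * b - n * q ^ 2 = 0 ∧
    2 * a * p1 - d1 * b ^ 2 - 2 * n * q * b = 0 := by
  -- A quartic is determined by its values at five points.
  have h0 := congrArg (eval 0) h
  have h1 := congrArg (eval 1) h
  have h2 := congrArg (eval (-1)) h
  have h3 := congrArg (eval 2) h
  have h4 := congrArg (eval (-2)) h
  simp only [eval_sub, eval_mul, eval_pow, eval_add, eval_C, eval_X, eval_one] at h0 h1 h2 h3 h4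
  refine ⟨?_, ?_, ?_, ?_⟩ <;> linarith

/-- The coefficients of a solution are determined by `q` and a sign `e`, where `-e` is the value
of `P` at the root of `Q`. Denominators are cleared. -/
lemma coeff_solution {p2 p1 a q b d2 d1 n : ℤ} (hab : a ^ 2 - n * b ^ 2 = 1)
    (hq : q ≠ 0)
    (h4 : p2 ^ 2 - d2 * q ^ 2 = 0)
    (h3 : 2 * p1 * p2 - d1 * q ^ 2 - 2 * d2 * q * b = 0)
    (h2 : p1 ^ 2 + 2 * a * p2 - d2 * b ^ 2 - 2 * d1 * q * b - n * q ^ 2 = 0)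
    (h1 : 2 * a * p1 - d1 * b ^ 2 - 2 * n * q * b = 0) :
    ∃ e : ℤ, (e = 1 ∨ e = -1) ∧ p2 * b ^ 2 = (a + e) * q ^ 2 ∧ p1 * b = 2 * (a + e) * q ∧
      d2 * b ^ 4 = (a + e) ^ 2 * q ^ 2 ∧ d1 * b ^ 3 = 2 * (a + e) ^ 2 * q := by
  -- `s = q ^ 2 * P (-b / q)`
  obtain ⟨s, hs⟩ : ∃ s, s = p2 * b ^ 2 - p1 * b * q + a * q ^ 2 := ⟨_, rfl⟩
  have hsq : s ^ 2 = (q ^ 2) ^ 2 := by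
    rw [hs]
    linear_combination b ^ 4 * h4 - b ^ 3 * q * h3 + b ^ 2 * q ^ 2 * h2 - b * q ^ 3 * h1
      + q ^ 4 * hab
  have hs0 : s ≠ 0 := by
    rintro rfl
    have : q ^ 4 = 0 := by linear_combination -hsq
    exact hq (by simpa using this)
  -- The derivative of `P` vanishes at `-b / q`.
  have hder : p1 * q - 2 * p2 * b = 0 := by
    have : 2 * s * (p1 * q - 2 * p2 * b) = 0 := by
      rw [hs]
      linear_combination -4 * b ^ 3 * h4 + 3 * b ^ 2 * q * h3 - 2 * b * q ^ 2 * h2 + q ^ 3 * h1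
    simpa [hs0] using this
  obtain ⟨e, he, hse⟩ : ∃ e : ℤ, (e = 1 ∨ e = -1) ∧ s = -e * q ^ 2 := by
    rcases sq_eq_sq_iff_eq_or_eq_neg.mp hsq with h | h
    · exact ⟨-1, Or.inr rfl, by linear_combination h⟩
    · exact ⟨1, Or.inl rfl, by linear_combination h⟩
  have he2 : e ^ 2 = 1 := by rcases he with rfl | rfl <;> norm_num
  have e1 : p2 * b ^ 2 = (a + e) * q ^ 2 := by
    linear_combination -b * hder + hs - hse
  have e2 : p1 * b = 2 * (a + e) * q := by
    apply mul_right_cancel₀ hq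
    linear_combination b * hder + 2 * e1
  refine ⟨e, he, e1, e2, ?_, ?_⟩
  · apply mul_right_cancel₀ (pow_ne_zero 2 hq)
    linear_combination -b ^ 4 * h4 + (p2 * b ^ 2 + (a + e) * q ^ 2) * e1
  · linear_combination -b * h1 + 2 * a * e2 + 2 * q * hab - 2 * q * he2

/-- The scaling factor `q / b ^ 3` has denominator dividing the gcd: `m = c * q / b ^ 3` is an
integer. Here `k` plays the role of `a + e`. -/
lemma exists_scaling {k b q d2 d1 : ℤ}
    (h2 : d2 * b ^ 4 = k ^ 2 * q ^ 2) (h1 : d1 * b ^ 3 = 2 * k ^ 2 * q) :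
    ∃ m : ℤ, m * b ^ 3 = q * gcd (gcd (b ^ 3) (k * b)) (2 * k ^ 2) := by
  obtain ⟨t, ht⟩ : b ^ 2 ∣ k * q := by
    rw [← Int.pow_dvd_pow_iff two_ne_zero]
    exact ⟨d2, by linear_combination -h2⟩
  obtain ⟨u, v, huv⟩ := exists_gcd_eq_mul_add_mul (b ^ 3) (k * b)
  obtain ⟨w, z, hwz⟩ := exists_gcd_eq_mul_add_mul (gcd (b ^ 3) (k * b)) (2 * k ^ 2)
  refine ⟨(q * u + t * v) * w + d1 * z, ?_⟩
  rw [hwz, huv]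
  linear_combination z * h1 - b * v * w * ht

theorem stmt_4 (n : ℕ) (hn : 0 < n) (hns : ¬ IsSquare n)
    (a b : ℤ) (hab : a ^ 2 - (n : ℤ) * b ^ 2 = 1) (hb : b ≠ 0)
    (P Q D : ℤ[X]) (hP : P.natDegree = 2) (hD : D.natDegree = 2) :
    (P ^ 2 - D * Q ^ 2 = 1 ∧ P.eval 0 = a ∧ Q.eval 0 = b ∧ D.eval 0 = (n : ℤ)) ↔
      (∃ (m e : ℤ), m ≠ 0 ∧ (e = 1 ∨ e = -1) ∧
        (let c : ℤ := gcd (gcd (b ^ 3) ((a + e) * b)) (2 * (a + e) ^ 2);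
          P.map (Int.castRingHom ℚ) =
            ((C ((b : ℚ) ^ 4 * (a + e)) * X ^ 2 + C (2 * (b : ℚ) ^ 2 * (a + e)) * X
                + C (a : ℚ)).comp (C ((m : ℚ) / (c : ℚ)) * X)) ∧
          Q.map (Int.castRingHom ℚ) =
            ((C ((b : ℚ) ^ 3) * X + C (b : ℚ)).comp (C ((m : ℚ) / (c : ℚ)) * X)) ∧
          D.map (Int.castRingHom ℚ) =
            ((C (((a : ℚ) + e) ^ 2 * b ^ 2) * X ^ 2 + C (2 * ((a : ℚ) + e) ^ 2) * X
                + C (n : ℚ)).comp (C ((m : ℚ) / (c : ℚ)) * X)))) := by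
  have hbQ : (b : ℚ) ≠ 0 := by exact_mod_cast hb
  constructor
  · rintro ⟨h, hPa, hQb, hDn⟩
    have hQdeg : Q.natDegree = 1 := by
      have hDQ : D * Q ^ 2 = P ^ 2 - C 1 := by rw [C_1]; linear_combination -h
      have hdeg := congrArg natDegree hDQ
      rw [natDegree_sub_C, natDegree_pow, hP] at hdeg
      have hQ0 : Q ≠ 0 := by rintro rfl; simp at hdeg
      have hD0 : D ≠ 0 := by rintro rfl; simp at hdeg
      rw [natDegree_mul hD0 (pow_ne_zero 2 hQ0), natDegree_pow, hD] at hdeg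
      omega
    have hPe := eq_quadratic_of_degree_le_two (natDegree_le_iff_degree_le.mp hP.le)
    have hDe := eq_quadratic_of_degree_le_two (natDegree_le_iff_degree_le.mp hD.le)
    have hQe := eq_X_add_C_of_natDegree_le_one hQdeg.le
    have hq : Q.coeff 1 ≠ 0 := by
      rw [← hQdeg]
      exact leadingCoeff_ne_zero.mpr (by rintro rfl; simp at hQdeg)
    rw [← coeff_zero_eq_eval_zero] at hPa hQb hDn
    rw [hPa] at hPe
    rw [hQb] at hQe
    rw [hDn] at hDe
    generalize P.coeff 2 = p2 at *
    generalize P.coeff 1 = p1 at *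
    generalize Q.coeff 1 = q at *
    generalize D.coeff 2 = d2 at *
    generalize D.coeff 1 = d1 at *
    rw [hPe, hQe, hDe] at h
    obtain ⟨h4, h3, h2, h1⟩ := coeff_equations h
    obtain ⟨e, he, e1, e2, e3, e4⟩ := coeff_solution hab hq h4 h3 h2 h1
    obtain ⟨m, hm⟩ := exists_scaling e3 e4
    have hc : gcd (gcd (b ^ 3) ((a + e) * b)) (2 * (a + e) ^ 2) ≠ 0 := by
      simp [gcd_eq_zero_iff, hb]
    refine ⟨m, e, ?_, he, ?_⟩
    · rintro rfl
      rw [zero_mul] at hm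
      exact mul_ne_zero hq hc hm.symm
    · intro c
      have hcQ : (c : ℚ) ≠ 0 := by exact_mod_cast hc
      have hr : (m : ℚ) / c = q / b ^ 3 := by
        rw [div_eq_div_iff hcQ (pow_ne_zero 3 hbQ)]
        exact_mod_cast hm
      have E1 : (p2 : ℚ) * b ^ 2 = (a + e) * q ^ 2 := by exact_mod_cast e1
      have E2 : (p1 : ℚ) * b = 2 * (a + e) * q := by exact_mod_cast e2
      have E3 : (d2 : ℚ) * b ^ 4 = (a + e) ^ 2 * q ^ 2 := by exact_mod_cast e3
      have E4 : (d1 : ℚ) * b ^ 3 = 2 * (a + e) ^ 2 * q := by exact_mod_cast e4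
      have c1 : (p2 : ℚ) = b ^ 4 * (a + e) * (q / b ^ 3) ^ 2 := by
        field_simp; linear_combination E1
      have c2 : (p1 : ℚ) = 2 * b ^ 2 * (a + e) * (q / b ^ 3) := by
        field_simp; linear_combination E2
      have c3 : (d2 : ℚ) = (a + e) ^ 2 * b ^ 2 * (q / b ^ 3) ^ 2 := by
        field_simp; linear_combination E3
      have c4 : (d1 : ℚ) = 2 * (a + e) ^ 2 * (q / b ^ 3) := by
        field_simp; linear_combination E4
      have c5 : (q : ℚ) = b ^ 3 * (q / b ^ 3) := by field_simp
      rw [hr, hPe, hQe, hDe]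
      generalize (q : ℚ) / b ^ 3 = r at c1 c2 c3 c4 c5 ⊢
      simp only [Polynomial.map_add, Polynomial.map_mul, Polynomial.map_pow, map_C, map_X,
        add_comp, mul_comp, pow_comp, C_comp, X_comp, eq_intCast (Int.castRingHom ℚ), Int.cast_natCast]
      refine ⟨?_, ?_, ?_⟩
      · rw [c1, c2]
        simp only [C_mul, C_pow]
        ring
      · rw [c5]
        simp only [C_mul, C_pow]
        ring
      · rw [c3, c4]
        simp only [C_mul, C_pow]
        ring
  · rintro ⟨m, e, -, he, hPm, hQm, hDm⟩
    generalize (m : ℚ) / _ = r at hPm hQm hDm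
    have he2 : (e : ℚ) ^ 2 = 1 := by rcases he with rfl | rfl <;> norm_num
    have habQ : (a : ℚ) ^ 2 - n * b ^ 2 = 1 := by exact_mod_cast hab
    refine ⟨?_, ?_, ?_, ?_⟩
    · apply map_injective (Int.castRingHom ℚ) Int.cast_injective
      rw [Polynomial.map_sub, Polynomial.map_mul, Polynomial.map_pow, Polynomial.map_pow,
        Polynomial.map_one, hPm, hQm, hDm]
      have he2C := congrArg (C : ℚ → ℚ[X]) he2
      have habC := congrArg (C : ℚ → ℚ[X]) habQ
      simp only [C_mul, C_pow, C_sub, C_1] at he2C habC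
      simp only [add_comp, mul_comp, pow_comp, C_comp, X_comp, C_mul, C_pow, C_add, C_ofNat, ofNat_comp]
      generalize (C (e : ℚ) : ℚ[X]) = e' at *
      generalize (C (a : ℚ) : ℚ[X]) = a' at *
      generalize (C (b : ℚ) : ℚ[X]) = b' at *
      generalize (C (n : ℚ) : ℚ[X]) = n' at *
      generalize (C r : ℚ[X]) * X = Y
      -- With `u = b² Y + 1`, one has `P₀ = (a + e) u² - e` and `Q₀ = b u`, and, modulo the two
      -- relations, `b² D₀ = (a + e)² u² - 2 e (a + e)`.
      linear_combination (1 - (b' ^ 2 * Y + 1) ^ 2) * he2C + (b' ^ 2 * Y + 1) ^ 2 * habC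
    · have := congrArg (eval 0) hPm
      simpa [eval_zero_map] using this
    · have := congrArg (eval 0) hQm
      simpa [eval_zero_map] using this
    · have := congrArg (eval 0) hDm
      have : ((D.eval 0 : ℤ) : ℚ) = n := by simpa [eval_zero_map] using this
      exact_mod_cast this
end

section
/- Let n be a positive integer which is not a perfect square, and let (a, b) be an integer solution of x² − n·y² = 1. If there exist P, Q, D ∈ ℚ[X] with deg(D) = 2, deg(P) = d, P² − D·Q² = 1, P(0) = a, Q(0) = b, D(0) = n, then there exist P₁, Q₁, D₁ ∈ ℤ[X] with deg(D₁) = 2, deg(P₁) = d, P₁² − D₁·Q₁² = 1, P₁(0) = a, Q₁(0) = b, D₁(0) = n. -/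
/-!
If `P, Q, D` solve the polynomial Pell equation over `ℚ`, so do `P(mX), Q(mX), D(mX)` for every
integer `m ≠ 0`, with the same degrees and the same values at `0`. The coefficient of `X ^ i` gets
multiplied by `m ^ i`, so it becomes an integer for `i ≥ 1` once `m` is a multiple of all the
denominators; for `i = 0` it is an integer by hypothesis (`a`, `b` or `n`).
-/

open Polynomial

/-- A rational polynomial with integral constant term becomes integral under `X ↦ m * X`, for all
multiples `m` of some fixed nonzero `N`. -/
lemma exists_int_lift_comp (f : ℚ[X]) (c : ℤ) (hf : f.eval 0 = (c : ℚ)) :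
    ∃ N : ℕ, N ≠ 0 ∧ ∀ m : ℕ, N ∣ m →
      ∃ g : ℤ[X], g.map (Int.castRingHom ℚ) = f.comp (C (m : ℚ) * X) := by
  refine ⟨∏ i ∈ f.support, (f.coeff i).den,
    Finset.prod_ne_zero_iff.2 fun i _ => (f.coeff i).den_ne_zero, fun m hm => ?_⟩
  change _ ∈ Set.range (map (Int.castRingHom ℚ))
  rw [← lifts_iff_set_range, lifts_iff_coeff_lifts]
  intro i
  rw [comp_C_mul_X_coeff]
  rcases Nat.eq_zero_or_pos i with rfl | hi
  · exact ⟨c, by simp [coeff_zero_eq_eval_zero, hf]⟩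
  by_cases hs : i ∈ f.support
  · obtain ⟨k, hk⟩ : (f.coeff i).den ∣ m ^ i :=
      ((Finset.dvd_prod_of_mem _ hs).trans hm).trans (dvd_pow_self m hi.ne')
    refine ⟨(f.coeff i).num * k, ?_⟩
    have h : (m : ℚ) ^ i = (f.coeff i).den * k := by exact_mod_cast hk
    rw [h, ← mul_assoc, Rat.mul_den_eq_num]
    simp
  · exact ⟨0, by simp [notMem_support_iff.1 hs]⟩

lemma natDegree_eq_of_map_eq_comp {f : ℚ[X]} {g : ℤ[X]} {m : ℕ} (hm : m ≠ 0)
    (h : g.map (Int.castRingHom ℚ) = f.comp (C (m : ℚ) * X)) : g.natDegree = f.natDegree := by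
  rw [← natDegree_map_eq_of_injective (Int.castRingHom ℚ).injective_int g, h, natDegree_comp,
    natDegree_C_mul_X _ (by exact_mod_cast hm), mul_one]

lemma eval_zero_eq_of_map_eq_comp {f : ℚ[X]} {g : ℤ[X]} {m : ℕ} {c : ℤ}
    (h : g.map (Int.castRingHom ℚ) = f.comp (C (m : ℚ) * X)) (hf : f.eval 0 = (c : ℚ)) :
    g.eval 0 = c := by
  have h' := congrArg (eval 0) h
  rw [eval_zero_map, eval_comp, eval_mul, eval_X, mul_zero, hf] at h'
  simpa using h'

theorem stmt_5 (n : ℕ) (hn : 0 < n) (hns : ¬ IsSquare n)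
    (a b : ℤ) (hab : a ^ 2 - (n : ℤ) * b ^ 2 = 1) (d : ℕ)
    (P Q D : ℚ[X]) (hD : D.natDegree = 2) (hP : P.natDegree = d)
    (hPell : P ^ 2 - D * Q ^ 2 = 1)
    (hP0 : P.eval 0 = (a : ℚ)) (hQ0 : Q.eval 0 = (b : ℚ)) (hD0 : D.eval 0 = (n : ℚ)) :
    ∃ P₁ Q₁ D₁ : ℤ[X], D₁.natDegree = 2 ∧ P₁.natDegree = d ∧
      P₁ ^ 2 - D₁ * Q₁ ^ 2 = 1 ∧
      P₁.eval 0 = a ∧ Q₁.eval 0 = b ∧ D₁.eval 0 = (n : ℤ) := by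
  have hD0' : D.eval 0 = ((n : ℤ) : ℚ) := by exact_mod_cast hD0
  obtain ⟨N₁, h₁, hN₁⟩ := exists_int_lift_comp P a hP0
  obtain ⟨N₂, h₂, hN₂⟩ := exists_int_lift_comp Q b hQ0
  obtain ⟨N₃, h₃, hN₃⟩ := exists_int_lift_comp D n hD0'
  have hm : N₁ * N₂ * N₃ ≠ 0 := mul_ne_zero (mul_ne_zero h₁ h₂) h₃
  obtain ⟨P₁, hP₁⟩ := hN₁ (N₁ * N₂ * N₃) ⟨N₂ * N₃, by ring⟩
  obtain ⟨Q₁, hQ₁⟩ := hN₂ (N₁ * N₂ * N₃) ⟨N₁ * N₃, by ring⟩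
  obtain ⟨D₁, hD₁⟩ := hN₃ (N₁ * N₂ * N₃) ⟨N₁ * N₂, by ring⟩
  refine ⟨P₁, Q₁, D₁, (natDegree_eq_of_map_eq_comp hm hD₁).trans hD,
    (natDegree_eq_of_map_eq_comp hm hP₁).trans hP, ?_, eval_zero_eq_of_map_eq_comp hP₁ hP0,
    eval_zero_eq_of_map_eq_comp hQ₁ hQ0, eval_zero_eq_of_map_eq_comp hD₁ hD0'⟩
  apply map_injective (Int.castRingHom ℚ) (Int.castRingHom ℚ).injective_int
  rw [Polynomial.map_sub, Polynomial.map_mul, Polynomial.map_pow, Polynomial.map_pow, hP₁, hQ₁,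
    hD₁, Polynomial.map_one, ← pow_comp, ← pow_comp, ← mul_comp, ← sub_comp, hPell, one_comp]
end

section
/- For every positive integer d, there exist a positive integer n which is not a perfect square, a fundamental solution (a, b) of the Pell equation x² − n·y² = 1, and polynomials P, Q, D ∈ ℤ[X] with deg(D) = 2, deg(P) = d, satisfying P² − D·Q² = 1, P(0) = a, Q(0) = b and D(0) = n. -/
open Polynomial

/-!
Any Pell equation with `n = a ^ 2 - 1`, `a > 1`, has fundamental solution `(a, 1)`, since `1` is the
least conceivable value of `y`. So it suffices to find a polynomial Pell identity of the right
degrees which specialises at `0` to `a ^ 2 - (a ^ 2 - 1) * 1 ^ 2 = 1`.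

Start from the Chebyshev identity `T_d ^ 2 - (X ^ 2 - 1) * U_{d-1} ^ 2 = 1`, and put `a = T_d(2)`,
`f = U_{d-1}(2)`. Substituting `L = 2 + f X` makes `U_{d-1}(L) ≡ U_{d-1}(2) = f ≡ 0` modulo `f`, so
`U_{d-1}(L) = f * Q` with `Q` integral and `Q(0) = 1`. Then `P = T_d(L)` and
`D = f ^ 2 * (L ^ 2 - 1)` satisfy `P ^ 2 - D * Q ^ 2 = 1`, where `deg P = d`, `deg D = 2`,
`P(0) = a` and `D(0) = 3 * f ^ 2 = a ^ 2 - 1`.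
-/

/-- `(a, b)` is a fundamental solution of the Pell equation `x² - n y² = 1`:
a solution in positive integers with `a + b √n` minimal among such solutions. -/
def IsFundamentalSolution (n a b : ℤ) : Prop :=
  0 < a ∧ 0 < b ∧ a ^ 2 - n * b ^ 2 = 1 ∧
    ∀ x y : ℤ, 0 < x → 0 < y → x ^ 2 - n * y ^ 2 = 1 →
      (a : ℝ) + (b : ℝ) * Real.sqrt n ≤ (x : ℝ) + (y : ℝ) * Real.sqrt n

/-- The polynomial Pell identity for Chebyshev polynomials. -/
lemma chebyshev_pell (d : ℤ) :
    Chebyshev.T ℤ d ^ 2 - (X ^ 2 - 1) * Chebyshev.U ℤ (d - 1) ^ 2 = 1 := by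
  have h := congrArg (fun p : ℤ[X] => p.comp (2 * X)) (Chebyshev.S_sq_add_S_sq ℤ (d - 1))
  simp only [sub_add_cancel, sub_comp, add_comp, mul_comp, pow_comp, X_comp, one_comp,
    Chebyshev.S_comp_two_mul_X] at h
  rw [Chebyshev.T_eq_U_sub_X_mul_U]
  linear_combination h

lemma one_lt_chebyshev_T_eval_two {d : ℤ} (hd : d ≠ 0) : 1 < (Chebyshev.T ℤ d).eval 2 := by
  have h := Chebyshev.one_lt_eval_T_real hd (x := 2) (by norm_num)
  have e := Chebyshev.algebraMap_eval_T (R := ℤ) (R' := ℝ) 2 d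
  simp only [algebraMap_int_eq, eq_intCast, Int.cast_ofNat] at e
  rw [← e] at h
  exact_mod_cast h

lemma not_isSquare_sq_sub_one {a : ℤ} (ha : 1 < a) : ¬ IsSquare (a ^ 2 - 1) := by
  rintro ⟨r, hr⟩
  have h : |r| < a := abs_lt_of_sq_lt_sq (by linarith [sq r]) (by linarith)
  have h' : r ^ 2 ≤ (a - 1) ^ 2 := sq_le_sq' (by linarith [neg_abs_le r]) (by
    have := le_abs_self r
    lia)
  nlinarith

lemma isFundamentalSolution_sq_sub_one {a : ℤ} (ha : 1 < a) :
    IsFundamentalSolution (a ^ 2 - 1) a 1 := by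
  refine ⟨by linarith, one_pos, by ring, fun x y hx hy h => ?_⟩
  have hy1 : (1 : ℤ) ≤ y := hy
  have hax : a ≤ x := by
    refine le_of_sq_le_sq ?_ hx.le
    nlinarith [mul_nonneg (by nlinarith : (0 : ℤ) ≤ a ^ 2 - 1) (by nlinarith : (0 : ℤ) ≤ y ^ 2 - 1)]
  gcongr

theorem stmt_8 (d : ℕ) (hd : 0 < d) :
    ∃ (n a b : ℤ), 0 < n ∧ ¬ IsSquare n ∧ IsFundamentalSolution n a b ∧
      ∃ P Q D : ℤ[X], D.natDegree = 2 ∧ P.natDegree = d ∧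
        P ^ 2 - D * Q ^ 2 = 1 ∧
        P.eval 0 = a ∧ Q.eval 0 = b ∧ D.eval 0 = n := by
  set T := Chebyshev.T ℤ d with hT
  set U := Chebyshev.U ℤ (d - 1) with hU
  have hpell : T ^ 2 - (X ^ 2 - 1) * U ^ 2 = 1 := chebyshev_pell d
  set a := T.eval 2 with ha
  set f := U.eval 2 with hf
  have ha1 : 1 < a := one_lt_chebyshev_T_eval_two (by lia)
  have haf : a ^ 2 - 3 * f ^ 2 = 1 := by
    have h := congrArg (eval 2) hpell
    simp only [eval_sub, eval_mul, eval_pow, eval_X, eval_one, ← ha, ← hf] at h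
    linarith
  have hf0 : f ≠ 0 := by
    intro h
    rw [h] at haf
    nlinarith
  set L : ℤ[X] := C f * X + C 2 with hL
  have hLdeg : L.natDegree = 1 := natDegree_linear hf0
  have hL0 : L.eval 0 = 2 := by simp [hL]
  obtain ⟨Q, hQ⟩ : C f ∣ U.comp L := by
    -- `L - 2 = f X` divides `U(L) - U(2) = U(L) - f`.
    have h := sub_dvd_eval_sub L (C 2) (U.map C)
    rw [eval_map, eval_map, eval₂_at_apply, ← hf, hL, add_sub_cancel_right] at h
    exact (dvd_sub_left dvd_rfl).1 ((dvd_mul_right _ _).trans h)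
  refine ⟨a ^ 2 - 1, a, 1, by nlinarith, not_isSquare_sq_sub_one ha1,
    isFundamentalSolution_sq_sub_one ha1, T.comp L, Q, C (f ^ 2) * (L ^ 2 - C 1),
    ?_, ?_, ?_, ?_, ?_, ?_⟩
  · rw [natDegree_C_mul (pow_ne_zero 2 hf0), natDegree_sub_C, natDegree_pow, hLdeg]
  · rw [natDegree_comp, hLdeg, hT, Chebyshev.natDegree_T, Int.natAbs_natCast, mul_one]
  · have h := congrArg (fun p : ℤ[X] => p.comp L) hpell
    simp only [sub_comp, mul_comp, pow_comp, X_comp, one_comp, hQ] at h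
    rw [C_pow, C_1]
    linear_combination h
  · rw [eval_comp, hL0]
  · have h := congrArg (eval 0) hQ
    rw [eval_comp, hL0, ← hf, eval_mul, eval_C] at h
    exact (mul_left_cancel₀ hf0 (by linarith)).symm
  · simp only [eval_mul, eval_C, eval_sub, eval_pow, hL0]
    linarith
end

section
/- Let n be a positive square-free integer which is not a perfect square, let K = ℚ(√n) with ring of integers O_K, let U be the subgroup of O_K^× consisting of units of norm 1, and let V = U ∩ ℤ[√n]. Then the quotient group U/V is cyclic of order dividing 3; equivalently, for every x ∈ U, x³ ∈ ℤ[√n]. -/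
open IntermediateField

/-!
Write `s = √n`. An element of `K = ℚ(s)` is `p + q s` with `p, q ∈ ℚ`, of norm `p² - n q²` and trace
`2 p`. If it is an integral element of norm `1`, then `a = 2 p` is an integer and
`n (2 q)² = a² - 4` is an integer, so `b = 2 q` is an integer because `n` is squarefree. Hence
every `x ∈ U` is `(a + b s) / 2` with `a² - n b² = 4` (`exists_half_int`), and
`x³ = (a (a² - 3) + b (a² - 1) s) / 2`. If `a` is even, then so is `b` by squarefreeness; if `a` is
odd, then both coefficients of `x³` are integers. In either case `x³ ∈ ℤ[s]` (`cube_mem`).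

For the quotient, let `x = (a + b s) / 2` and `y = (c + d s) / 2` in `U` lie outside `V`. Then
`a, b, c, d` are all odd, and the even numbers `bc + ad` and `bc - ad` add up to `2 bc ≡ 2 mod 4`,
so one of them is divisible by `4`. These are the `s`-coefficients of `4 x y` and `4 x y⁻¹`, so
`x y ∈ V` or `x y⁻¹ ∈ V` (`mul_mem_or`). Thus any nontrivial class of `U / V` generates the
quotient, and its cube is trivial.
-/

theorem gen_sq (n : ℕ) : (AdjoinSimple.gen ℚ (Real.sqrt n)) ^ 2 = (n : ℚ⟮Real.sqrt n⟯) := by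
  apply Subtype.ext
  simp

theorem exists_rat_coords (n : ℕ) (x : ℚ⟮Real.sqrt n⟯) :
    ∃ p q : ℚ, x = algebraMap ℚ _ p + algebraMap ℚ _ q * AdjoinSimple.gen ℚ (Real.sqrt n) := by
  have hint : IsIntegral ℚ (Real.sqrt n) :=
    ⟨Polynomial.X ^ 2 - Polynomial.C (n : ℚ), Polynomial.monic_X_pow_sub_C _ two_ne_zero, by simp⟩
  have hx : (x : ℝ) ∈ Algebra.adjoin ℚ {Real.sqrt n} := by
    rw [← adjoin_simple_toSubalgebra_of_isAlgebraic hint.isAlgebraic]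
    exact x.2
  have key : ∀ y : ℝ, y ∈ Algebra.adjoin ℚ {Real.sqrt n} →
      ∃ p q : ℚ, y = p + q * Real.sqrt n := by
    intro y hy
    induction hy using Algebra.adjoin_induction with
    | mem y hy => exact ⟨0, 1, by simp_all⟩
    | algebraMap r => exact ⟨r, 0, by simp⟩
    | add y z _ _ hy hz =>
      obtain ⟨p, q, rfl⟩ := hy
      obtain ⟨r, t, rfl⟩ := hz
      exact ⟨p + r, q + t, by push_cast; ring⟩
    | mul y z _ _ hy hz =>
      obtain ⟨p, q, rfl⟩ := hy
      obtain ⟨r, t, rfl⟩ := hz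
      refine ⟨p * r + n * q * t, p * t + q * r, ?_⟩
      have h : Real.sqrt n ^ 2 = n := by simp
      push_cast
      linear_combination (q * t : ℝ) * h
  obtain ⟨p, q, h⟩ := key _ hx
  refine ⟨p, q, Subtype.ext ?_⟩
  simpa using h

/-- The `ℚ`-basis `1, √n` of `ℚ(√n)`. -/
noncomputable def sqrtBasis (n : ℕ) (hns : ¬ IsSquare n) : Module.Basis (Fin 2) ℚ ℚ⟮Real.sqrt n⟯ :=
  Module.Basis.mk (v := ![1, AdjoinSimple.gen ℚ (Real.sqrt n)])
    (by
      rw [LinearIndependent.pair_iff]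
      intro p q h
      have h' : (p : ℝ) + q * Real.sqrt n = 0 := by
        have := congrArg (Subtype.val) h
        simpa [Algebra.smul_def] using this
      have hirr : Irrational (Real.sqrt n) := irrational_sqrt_natCast_iff.2 hns
      have hq : q = 0 := by
        by_contra hq
        refine hirr ⟨-p / q, ?_⟩
        have : (q : ℝ) ≠ 0 := by exact_mod_cast hq
        push_cast
        field_simp
        linarith
      subst hq
      simpa using h')
    (by
      intro x _
      obtain ⟨p, q, rfl⟩ := exists_rat_coords n x
      have := Submodule.mem_span_pair (R := ℚ) (x := (1 : ℚ⟮Real.sqrt n⟯))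
        (y := AdjoinSimple.gen ℚ (Real.sqrt n))
        (z := algebraMap ℚ _ p + algebraMap ℚ _ q * AdjoinSimple.gen ℚ (Real.sqrt n))
      simp only [Matrix.range_cons, Matrix.range_empty, Set.union_empty, Set.singleton_union]
      exact this.2 ⟨p, q, by simp [Algebra.smul_def]⟩)

theorem leftMulMatrix_coords (n : ℕ) (hns : ¬ IsSquare n) (p q : ℚ) :
    Algebra.leftMulMatrix (sqrtBasis n hns)
      (algebraMap ℚ _ p + algebraMap ℚ _ q * AdjoinSimple.gen ℚ (Real.sqrt n)) =
      !![p, n * q; q, p] := by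
  have h0 : sqrtBasis n hns 0 = 1 := by simp [sqrtBasis]
  have h1 : sqrtBasis n hns 1 = AdjoinSimple.gen ℚ (Real.sqrt n) := by simp [sqrtBasis]
  have e0 : (algebraMap ℚ ℚ⟮Real.sqrt n⟯ p + algebraMap ℚ _ q * AdjoinSimple.gen ℚ (Real.sqrt n))
      * sqrtBasis n hns 0 = p • sqrtBasis n hns 0 + q • sqrtBasis n hns 1 := by
    rw [h0, h1, Algebra.smul_def, Algebra.smul_def]; ring
  have e1 : (algebraMap ℚ ℚ⟮Real.sqrt n⟯ p + algebraMap ℚ _ q * AdjoinSimple.gen ℚ (Real.sqrt n))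
      * sqrtBasis n hns 1 = (n * q) • sqrtBasis n hns 0 + p • sqrtBasis n hns 1 := by
    rw [h0, h1, Algebra.smul_def, Algebra.smul_def, map_mul, map_natCast]
    linear_combination (algebraMap ℚ _ q) * gen_sq n
  ext i j
  rw [Algebra.leftMulMatrix_eq_repr_mul]
  fin_cases j
  · simp only [Fin.zero_eta, e0]
    fin_cases i <;> simp
  · simp only [Fin.mk_one, e1]
    fin_cases i <;> simp

/-- A rational number `r` with `n r²` an integer is an integer, when `n` is squarefree. -/
theorem int_of_mul_sq (n : ℕ) (hsf : Squarefree n) (r : ℚ) (m : ℤ) (h : n * r ^ 2 = m) :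
    ∃ b : ℤ, r = b := by
  have hd : (r.den : ℚ) ≠ 0 := by exact_mod_cast r.den_nz
  have h1 : (n : ℤ) * r.num ^ 2 = m * r.den ^ 2 := by
    have h2 : (n : ℚ) * r.num ^ 2 = m * r.den ^ 2 := by
      rw [← h]
      nth_rewrite 2 [← Rat.num_div_den r]
      field_simp
    exact_mod_cast h2
  have h2 : (r.den : ℤ) ^ 2 ∣ (n : ℤ) := by
    have hc : IsCoprime ((r.den : ℤ) ^ 2) (r.num ^ 2) :=
      (Rat.isCoprime_num_den r).symm.pow
    exact hc.dvd_of_dvd_mul_right ⟨m, by rw [h1]; ring⟩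
  have h3 : r.den * r.den ∣ n := by
    rw [← sq]; exact_mod_cast h2
  have h4 : r.den = 1 := Nat.isUnit_iff.1 (hsf _ h3)
  exact ⟨r.num, ((Rat.den_eq_one_iff r).1 h4).symm⟩

theorem exists_half_int (n : ℕ) (hsf : Squarefree n) (hns : ¬ IsSquare n) (x : ℚ⟮Real.sqrt n⟯)
    (hx : IsIntegral ℤ x) (hN : Algebra.norm ℚ x = 1) :
    ∃ a b : ℤ, 2 * x = a + b * AdjoinSimple.gen ℚ (Real.sqrt n) ∧ a ^ 2 - n * b ^ 2 = 4 := by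
  obtain ⟨p, q, rfl⟩ := exists_rat_coords n x
  rw [Algebra.norm_eq_matrix_det (sqrtBasis n hns), leftMulMatrix_coords, Matrix.det_fin_two] at hN
  simp only [Matrix.of_apply, Matrix.cons_val', Matrix.cons_val_zero, Matrix.cons_val_one,
    Matrix.cons_val_fin_one] at hN
  have : FiniteDimensional ℚ ℚ⟮Real.sqrt n⟯ := (sqrtBasis n hns).finiteDimensional_of_finite
  have htr := Algebra.isIntegral_trace (L := ℚ) hx
  rw [Algebra.trace_eq_matrix_trace (sqrtBasis n hns), leftMulMatrix_coords,
    Matrix.trace_fin_two] at htr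
  simp only [Matrix.of_apply, Matrix.cons_val', Matrix.cons_val_zero, Matrix.cons_val_one,
    Matrix.cons_val_fin_one] at htr
  obtain ⟨a, ha⟩ := IsIntegrallyClosed.isIntegral_iff.1 htr
  have ha : (a : ℚ) = p + p := by simpa using ha
  obtain ⟨b, hb⟩ := int_of_mul_sq n hsf (2 * q) (a ^ 2 - 4) (by
    push_cast
    rw [ha]
    linear_combination -4 * hN)
  refine ⟨a, b, ?_, ?_⟩
  · have h1 : (a : ℚ⟮Real.sqrt n⟯) = algebraMap ℚ _ (p + p) := by rw [← ha]; simp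
    have h2 : (b : ℚ⟮Real.sqrt n⟯) = algebraMap ℚ _ (2 * q) := by rw [hb]; simp
    rw [h1, h2, map_add, map_mul, map_ofNat]
    ring
  · have : (a : ℚ) ^ 2 - n * b ^ 2 = 4 := by
      rw [ha, ← hb]
      linear_combination 4 * hN
    exact_mod_cast this

theorem mem_adjoin_of_coords (n : ℕ) (x : ℚ⟮Real.sqrt n⟯) (k a b : ℤ) (hk : k ≠ 0)
    (h : k * x = a + b * AdjoinSimple.gen ℚ (Real.sqrt n)) (ha : k ∣ a) (hb : k ∣ b) :
    x ∈ Algebra.adjoin ℤ ({AdjoinSimple.gen ℚ (Real.sqrt n)} : Set ℚ⟮Real.sqrt n⟯) := by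
  obtain ⟨a, rfl⟩ := ha
  obtain ⟨b, rfl⟩ := hb
  have hk' : (k : ℚ⟮Real.sqrt n⟯) ≠ 0 := by exact_mod_cast hk
  have : x = a + b * AdjoinSimple.gen ℚ (Real.sqrt n) := by
    apply mul_left_cancel₀ hk'
    rw [h]; push_cast; ring
  rw [this]
  exact add_mem (intCast_mem _ a)
    (mul_mem (intCast_mem _ b) (Algebra.subset_adjoin rfl))

theorem even_of_even (n : ℕ) (hsf : Squarefree n) (a b : ℤ) (h : a ^ 2 - n * b ^ 2 = 4)
    (ha : Even a) : Even b := by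
  by_contra hb
  rw [Int.not_even_iff_odd] at hb
  obtain ⟨c, rfl⟩ := ha
  obtain ⟨d, rfl⟩ := hb
  have h4 : (4 : ℤ) ∣ n :=
    ⟨c ^ 2 - 1 - n * (d ^ 2 + d), by linear_combination -h⟩
  have h4' : 2 * 2 ∣ n := by exact_mod_cast h4
  exact absurd (Nat.isUnit_iff.1 (hsf 2 h4')) (by norm_num)

theorem even_of_even' (n : ℕ) (a b : ℤ) (h : a ^ 2 - n * b ^ 2 = 4) (hb : Even b) : Even a := by
  have : Even (a ^ 2) := by
    rw [show a ^ 2 = n * b ^ 2 + 4 by linear_combination h]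
    exact ((hb.pow_of_ne_zero two_ne_zero).mul_left _).add (by decide)
  exact (Int.even_pow.1 this).1

theorem cube_mem (n : ℕ) (hsf : Squarefree n) (x : ℚ⟮Real.sqrt n⟯) (a b : ℤ)
    (hx : 2 * x = a + b * AdjoinSimple.gen ℚ (Real.sqrt n)) (h : a ^ 2 - n * b ^ 2 = 4) :
    x ^ 3 ∈ Algebra.adjoin ℤ ({AdjoinSimple.gen ℚ (Real.sqrt n)} : Set ℚ⟮Real.sqrt n⟯) := by
  rcases Int.even_or_odd a with ha | ha
  · exact pow_mem (mem_adjoin_of_coords n x 2 a b two_ne_zero (by simpa using hx) ha.two_dvd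
      (even_of_even n hsf a b h ha).two_dvd) 3
  · have hs := gen_sq n
    have hK : (a : ℚ⟮Real.sqrt n⟯) ^ 2 - n * b ^ 2 = 4 := by exact_mod_cast h
    refine mem_adjoin_of_coords n (x ^ 3) 2 (a * (a ^ 2 - 3)) (b * (a ^ 2 - 1)) two_ne_zero ?_ ?_ ?_
    · have hx3 : x = (a + b * AdjoinSimple.gen ℚ (Real.sqrt n)) / 2 := by
        rw [← hx]; ring
      rw [hx3]
      push_cast
      generalize AdjoinSimple.gen ℚ (Real.sqrt n) = s at *
      linear_combination (3 * a * b ^ 2 / 4 + b ^ 3 * s / 4) * hs -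
        (3 * a / 4 + b * s / 4) * hK
    · exact ((ha.pow.sub_odd (by decide)).mul_left _).two_dvd
    · exact ((ha.pow.sub_odd (by decide)).mul_left _).two_dvd

/-- If `4` divides the `√n`-coefficient of `4xy`, with `2x, 2y ∈ ℤ[√n]` of norm `4`, then
`xy ∈ ℤ[√n]`: the norm equation for `4xy` forces the rational coefficient to be divisible by `4`. -/
theorem mul_mem_of_dvd (n : ℕ) (x y : ℚ⟮Real.sqrt n⟯) (a b c d : ℤ)
    (hx : 2 * x = a + b * AdjoinSimple.gen ℚ (Real.sqrt n)) (h : a ^ 2 - n * b ^ 2 = 4)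
    (hy : 2 * y = c + d * AdjoinSimple.gen ℚ (Real.sqrt n)) (h' : c ^ 2 - n * d ^ 2 = 4)
    (hd : 4 ∣ b * c + a * d) :
    x * y ∈ Algebra.adjoin ℤ ({AdjoinSimple.gen ℚ (Real.sqrt n)} : Set ℚ⟮Real.sqrt n⟯) := by
  refine mem_adjoin_of_coords n _ 4 (a * c + n * b * d) (b * c + a * d) four_ne_zero ?_ ?_ hd
  · have hs := gen_sq n
    push_cast
    linear_combination 2 * y * hx + (a + b * AdjoinSimple.gen ℚ (Real.sqrt n)) * hy + b * d * hs
  · obtain ⟨k, hk⟩ := hd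
    rw [← Int.pow_dvd_pow_iff two_ne_zero]
    exact ⟨1 + n * k ^ 2, by
      linear_combination 4 * h' + (c ^ 2 - n * d ^ 2) * h + n * (b * c + a * d + 4 * k) * hk⟩

theorem mul_mem_or (n : ℕ) (hsf : Squarefree n) (x y y' : ℚ⟮Real.sqrt n⟯) (a b c d : ℤ)
    (hyy : y * y' = 1)
    (hx : 2 * x = a + b * AdjoinSimple.gen ℚ (Real.sqrt n)) (h : a ^ 2 - n * b ^ 2 = 4)
    (hy : 2 * y = c + d * AdjoinSimple.gen ℚ (Real.sqrt n)) (h' : c ^ 2 - n * d ^ 2 = 4)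
    (hxn : x ∉ Algebra.adjoin ℤ ({AdjoinSimple.gen ℚ (Real.sqrt n)} : Set ℚ⟮Real.sqrt n⟯))
    (hyn : y ∉ Algebra.adjoin ℤ ({AdjoinSimple.gen ℚ (Real.sqrt n)} : Set ℚ⟮Real.sqrt n⟯)) :
    x * y ∈ Algebra.adjoin ℤ ({AdjoinSimple.gen ℚ (Real.sqrt n)} : Set ℚ⟮Real.sqrt n⟯) ∨
    x * y' ∈ Algebra.adjoin ℤ ({AdjoinSimple.gen ℚ (Real.sqrt n)} : Set ℚ⟮Real.sqrt n⟯) := by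
  have odd_of : ∀ (z : ℚ⟮Real.sqrt n⟯) (u v : ℤ),
      2 * z = u + v * AdjoinSimple.gen ℚ (Real.sqrt n) → u ^ 2 - n * v ^ 2 = 4 →
      z ∉ Algebra.adjoin ℤ ({AdjoinSimple.gen ℚ (Real.sqrt n)} : Set ℚ⟮Real.sqrt n⟯) →
      Odd u ∧ Odd v := by
    intro z u v hz huv hzn
    have hu : ¬ Even u := fun hu => hzn (mem_adjoin_of_coords n z 2 u v two_ne_zero
      (by simpa using hz) hu.two_dvd (even_of_even n hsf u v huv hu).two_dvd)
    exact ⟨Int.not_even_iff_odd.1 hu,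
      Int.not_even_iff_odd.1 fun hv => hu (even_of_even' n u v huv hv)⟩
  obtain ⟨ha, hb⟩ := odd_of x a b hx h hxn
  obtain ⟨hc, hd⟩ := odd_of y c d hy h' hyn
  have hy' : 2 * y' = c + (-d : ℤ) * AdjoinSimple.gen ℚ (Real.sqrt n) := by
    have hs := gen_sq n
    have hK : (c : ℚ⟮Real.sqrt n⟯) ^ 2 - n * d ^ 2 = 4 := by exact_mod_cast h'
    push_cast
    generalize AdjoinSimple.gen ℚ (Real.sqrt n) = s at *
    linear_combination (-y' / 2) * hK + (c - d * s) * hyy - (c - d * s) * y' / 2 * hy +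
      y' / 2 * d ^ 2 * hs
  have h4 : 4 ∣ b * c + a * d ∨ 4 ∣ b * c + a * (-d) := by
    obtain ⟨u, hu⟩ := hb.mul hc
    obtain ⟨v, hv⟩ := ha.mul hd
    rw [mul_neg, hu, hv]
    omega
  rcases h4 with h4 | h4
  · exact .inl (mul_mem_of_dvd n x y a b c d hx h hy h' h4)
  · exact .inr (mul_mem_of_dvd n x y' a b c (-d) hx h hy' (by simpa using h') h4)

/-- A group in which all cubes are trivial and any two nontrivial elements are equal or mutually
inverse is cyclic of order `1` or `3`. -/
theorem cyclic_of_eq_or {G : Type*} [Group G] (h3 : ∀ g : G, g ^ 3 = 1)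
    (h : ∀ g k : G, g ≠ 1 → k ≠ 1 → g * k = 1 ∨ g * k⁻¹ = 1) :
    IsCyclic G ∧ Nat.card G ∣ 3 := by
  obtain ⟨g, hg⟩ : ∃ g : G, ∀ k, k ∈ Subgroup.zpowers g := by
    by_cases ht : ∃ g : G, g ≠ 1
    · obtain ⟨g, hg⟩ := ht
      refine ⟨g, fun k => ?_⟩
      by_cases hk : k = 1
      · rw [hk]; exact one_mem _
      · rcases h k g hk hg with h | h
        · rw [eq_inv_of_mul_eq_one_left h]
          exact inv_mem (Subgroup.mem_zpowers g)
        · rw [mul_inv_eq_one.1 h]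
          exact Subgroup.mem_zpowers g
    · push Not at ht
      exact ⟨1, fun k => by rw [ht k]; exact one_mem _⟩
  refine ⟨⟨g, hg⟩, ?_⟩
  rw [← orderOf_eq_card_of_forall_mem_zpowers hg]
  exact orderOf_dvd_of_pow_eq_one (h3 g)

theorem quotient_cyclic_of {H : Type*} [CommGroup H] (U V : Subgroup H)
    (h3 : ∀ x ∈ U, x ^ 3 ∈ V)
    (h : ∀ x ∈ U, ∀ y ∈ U, x ∉ V → y ∉ V → x * y ∈ V ∨ x * y⁻¹ ∈ V) :
    IsCyclic (U ⧸ V.subgroupOf U) ∧ Nat.card (U ⧸ V.subgroupOf U) ∣ 3 := by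
  refine cyclic_of_eq_or ?_ ?_
  · intro g
    obtain ⟨x, rfl⟩ := QuotientGroup.mk_surjective g
    rw [← QuotientGroup.mk_pow, QuotientGroup.eq_one_iff, Subgroup.mem_subgroupOf]
    exact h3 x x.2
  · intro g k hg hk
    obtain ⟨x, rfl⟩ := QuotientGroup.mk_surjective g
    obtain ⟨y, rfl⟩ := QuotientGroup.mk_surjective k
    rw [Ne, QuotientGroup.eq_one_iff, Subgroup.mem_subgroupOf] at hg hk
    rw [← QuotientGroup.mk_inv, ← QuotientGroup.mk_mul, ← QuotientGroup.mk_mul,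
      QuotientGroup.eq_one_iff, QuotientGroup.eq_one_iff, Subgroup.mem_subgroupOf,
      Subgroup.mem_subgroupOf]
    exact h x x.2 y y.2 hg hk

theorem stmt_10 (n : ℕ) (hn : 0 < n) (hsf : Squarefree n) (hns : ¬ IsSquare n)
    (U : Subgroup (integralClosure ℤ ℚ⟮Real.sqrt n⟯)ˣ)
    (hU : ∀ x : (integralClosure ℤ ℚ⟮Real.sqrt n⟯)ˣ,
      x ∈ U ↔ Algebra.norm ℚ
        ((x : integralClosure ℤ ℚ⟮Real.sqrt n⟯) : ℚ⟮Real.sqrt n⟯) = 1)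
    (V : Subgroup (integralClosure ℤ ℚ⟮Real.sqrt n⟯)ˣ)
    (hV : ∀ x : (integralClosure ℤ ℚ⟮Real.sqrt n⟯)ˣ,
      x ∈ V ↔ x ∈ U ∧
        ((x : integralClosure ℤ ℚ⟮Real.sqrt n⟯) : ℚ⟮Real.sqrt n⟯) ∈
          Algebra.adjoin ℤ
            ({AdjoinSimple.gen ℚ (Real.sqrt n)} : Set ℚ⟮Real.sqrt n⟯)) :
    IsCyclic (U ⧸ V.subgroupOf U) ∧ Nat.card (U ⧸ V.subgroupOf U) ∣ 3 ∧
      ∀ x : (integralClosure ℤ ℚ⟮Real.sqrt n⟯)ˣ, x ∈ U →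
        ((x : integralClosure ℤ ℚ⟮Real.sqrt n⟯) : ℚ⟮Real.sqrt n⟯) ^ 3 ∈
          Algebra.adjoin ℤ
            ({AdjoinSimple.gen ℚ (Real.sqrt n)} : Set ℚ⟮Real.sqrt n⟯) := by
  have rep : ∀ x : (integralClosure ℤ ℚ⟮Real.sqrt n⟯)ˣ, x ∈ U → ∃ a b : ℤ,
      2 * ((x : integralClosure ℤ ℚ⟮Real.sqrt n⟯) : ℚ⟮Real.sqrt n⟯) =
        a + b * AdjoinSimple.gen ℚ (Real.sqrt n) ∧ a ^ 2 - n * b ^ 2 = 4 := fun x hx =>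
    exists_half_int n hsf hns _ (x : integralClosure ℤ ℚ⟮Real.sqrt n⟯).2 ((hU x).1 hx)
  have cube : ∀ x : (integralClosure ℤ ℚ⟮Real.sqrt n⟯)ˣ, x ∈ U →
      ((x : integralClosure ℤ ℚ⟮Real.sqrt n⟯) : ℚ⟮Real.sqrt n⟯) ^ 3 ∈
        Algebra.adjoin ℤ ({AdjoinSimple.gen ℚ (Real.sqrt n)} : Set ℚ⟮Real.sqrt n⟯) := by
    intro x hx
    obtain ⟨a, b, h1, h2⟩ := rep x hx
    exact cube_mem n hsf _ a b h1 h2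
  rw [← and_assoc]
  refine ⟨quotient_cyclic_of U V ?_ ?_, cube⟩
  · intro x hx
    exact (hV _).2 ⟨pow_mem hx 3, cube x hx⟩
  · intro x hx y hy hxV hyV
    obtain ⟨a, b, h1, h2⟩ := rep x hx
    obtain ⟨c, d, h3, h4⟩ := rep y hy
    have hyy : ((y : integralClosure ℤ ℚ⟮Real.sqrt n⟯) : ℚ⟮Real.sqrt n⟯) *
        ((y⁻¹ : (integralClosure ℤ ℚ⟮Real.sqrt n⟯)ˣ) : integralClosure ℤ ℚ⟮Real.sqrt n⟯) = 1 :=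
      congrArg Subtype.val y.mul_inv
    rcases mul_mem_or n hsf _ _ _ a b c d hyy h1 h2 h3 h4
      (fun h => hxV ((hV x).2 ⟨hx, h⟩)) (fun h => hyV ((hV y).2 ⟨hy, h⟩)) with h | h
    · exact .inl ((hV _).2 ⟨mul_mem hx hy, h⟩)
    · exact .inr ((hV _).2 ⟨mul_mem hx (inv_mem hy), h⟩)
end

section
/- Let n be a positive square-free integer which is not a perfect square, let (a, b) be a fundamental solution of the Pell equation x² − n·y² = 1, and suppose P, Q, D ∈ ℤ[X] satisfy deg(D) = 2, deg(P) = d ≥ 1, P² − D·Q² = 1, P(0) = a, Q(0) = b and D(0) = n. Then d ≤ 6; more precisely, if n ≡ 2 or 3 (mod 4) then d ∈ {1, 2}, and if n ≡ 1 (mod 4) then d ∈ {1, 2, 3, 6}. -/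
open Polynomial

/-!
Comparing degrees in `P² - D Q² = 1` shows that `P' = k d Q`, where `k²` is the leading coefficient
of `D`: `Q` divides `2 P'` because it is coprime to `P`, and the two have the same degree
(`exists_derivative_eq`). Let `Δ = (D')² - 4 k² D` be the discriminant of `D`, a constant, nonzero
because `n` is not a square. Multiplying `P + Q √D` by `D' - 2 k √D`, which has norm `Δ`, yields a
solution of a Pell equation with a rescaled constant and with `d` replaced by `d - 1` in the
differential relation. Iterating `d` times and evaluating at `0` gives
`Δ ^ d (a + b √n) = r (B + 2 k √n) ^ d` with `r² = Δ ^ d` and `B = D'(0)` (`descent`).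

So, up to sign, the fundamental unit `ε = a + b √n` is the `d`-th power of
`η = (B + 2 k √n) / √Δ`. If `d` is odd, then `Δ` is a square and `η` lies in `ℚ(√n)`; if `d = 2 e`,
then `η²` lies in `ℚ(√n)` and `ε = ± (η²) ^ e`. In both cases `± ε` is an `e`-th power of an element
`z` of norm `1` of `ℚ(√n)`, with `d = e` or `d = 2 e` (`odd_or_two_mul`). As `z` is a root of a
unit, it is an algebraic integer, so `z = (x + y √n) / 2` with `x, y ∈ ℤ` (`exists_half_integers`).
If `x` and `y` are even, then `z` is a Pell solution, hence `±` a power of `ε`, and `e = 1`.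
Otherwise `n ≡ 1 [MOD 4]` and `z³ ∈ ℤ[√n]`, so `e ∣ 3` (`exponent_eq`). To avoid signs, the
relations between `ε` and `z` are squared throughout.
-/

theorem eq_zero_of_mul_sq_eq_C {D Q : ℤ[X]} {c : ℤ} (hD : D.natDegree = 2)
    (h : D * Q ^ 2 = C c) : Q = 0 := by
  by_contra hQ
  have hD0 : D ≠ 0 := by rintro rfl; simp at hD
  have := congrArg natDegree h
  rw [natDegree_mul hD0 (pow_ne_zero 2 hQ), natDegree_C] at this
  omega

/-- If `P² - D Q²` is a constant `c` and `P' = k m Q`, then `P + Q √D` is, up to scaling, the `m`-th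
power of `D' + 2 k √D`; this is the resulting identity at `0`, in `ℤ√n`. The second differential
relation on `P` and `Q` follows from the first two by differentiating when `Q ≠ 0`; it is assumed
so as to be available for every pair met in the induction. -/
theorem descent {n : ℤ} {D : ℤ[X]} {k Δ : ℤ} (hD : D.natDegree = 2)
    (hU : derivative (derivative D) = C (2 * k ^ 2))
    (hΔ : derivative D ^ 2 - C (4 * k ^ 2) * D = C Δ) (hD0 : D.eval 0 = n) (m : ℕ) :
    ∀ (P Q : ℤ[X]) (c : ℤ), P ^ 2 - D * Q ^ 2 = C c →
      derivative P = C (k * m) * Q →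
      C (2 * k * m) * P = derivative D * Q + 2 * D * derivative Q →
      ∃ r : ℤ, r ^ 2 = c * Δ ^ m ∧
        ((Δ ^ m : ℤ) : ℤ√n) * ⟨P.eval 0, Q.eval 0⟩ =
          (r : ℤ√n) * (⟨(derivative D).eval 0, 2 * k⟩ : ℤ√n) ^ m := by
  induction m with
  | zero =>
    intro P Q c h hP' hQ'
    have hP : P = C (P.coeff 0) :=
      eq_C_of_natDegree_eq_zero (derivative_eq_zero.mp (by simpa using hP'))
    have hQ : Q = 0 := by
      apply eq_zero_of_mul_sq_eq_C (c := P.coeff 0 ^ 2 - c) hD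
      rw [C_sub, C_pow, ← hP, ← h]; ring
    refine ⟨P.coeff 0, ?_, ?_⟩
    · rw [hQ, hP] at h
      have : C (P.coeff 0 ^ 2) = C c := by rw [← h]; simp
      simpa using C_injective this
    · rw [hQ, ← coeff_zero_eq_eval_zero P]
      ext <;> simp
  | succ m ih =>
    intro P Q c h hP' hQ'
    -- The new pair consists of the coefficients of `(P + Q √D) (D' - 2 k √D)`.
    obtain ⟨r, hr, hE⟩ := ih (derivative D * P - C (2 * k) * D * Q)
      (derivative D * Q - C (2 * k) * P) (c * Δ)
      (by
        rw [C_mul (a := c), ← h, ← hΔ]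
        simp only [C_mul, C_pow, C_ofNat]
        ring)
      (by
        simp only [derivative_sub, derivative_mul, hU, hP', derivative_C]
        simp only [C_mul, C_pow, C_ofNat, Nat.cast_add, Nat.cast_one, C_add, C_1] at hQ' ⊢
        linear_combination (C k : ℤ[X]) * hQ')
      (by
        simp only [derivative_sub, derivative_mul, hU, hP', derivative_C]
        simp only [C_mul, C_pow, C_ofNat, Nat.cast_add, Nat.cast_one, C_add, C_1] at hQ' ⊢
        linear_combination (derivative D : ℤ[X]) * hQ')
    refine ⟨r, by rw [hr]; ring, ?_⟩
    have hΔ0 := congrArg (eval 0) hΔ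
    simp only [eval_sub, eval_pow, eval_mul, eval_C, hD0] at hΔ0
    rw [pow_succ Δ m, Int.cast_mul, mul_assoc, pow_succ (_ : ℤ√n) m, ← mul_assoc (r : ℤ√n), ← hE,
      mul_assoc]
    congr 1
    rw [← hΔ0]
    ext <;> simp only [Zsqrtd.re_mul, Zsqrtd.im_mul, Zsqrtd.re_intCast, Zsqrtd.im_intCast,
      eval_sub, eval_mul, eval_C, hD0] <;> ring

theorem isFundamental_mk {n a b : ℤ} (hn : 0 < n) (h : IsFundamentalSolution n a b) :
    Pell.IsFundamental (Pell.Solution₁.mk a b h.2.2.1) := by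
  obtain ⟨ha, hb, hab, hmin⟩ := h
  refine ⟨?_, hb, ?_⟩
  · rw [Pell.Solution₁.x_mk]
    have : 0 < n * b ^ 2 := by positivity
    nlinarith
  · intro s hs
    rw [Pell.Solution₁.x_mk]
    by_contra! hlt
    have hy := Pell.Solution₁.y_ne_zero_of_one_lt_x hs
    have hp := s.prop
    have h1 := hmin s.x |s.y| (by omega) (abs_pos.mpr hy) (by rwa [sq_abs])
    have h2 : |s.y| < b := by
      refine abs_lt_of_sq_lt_sq ?_ hb.le
      have : s.x ^ 2 < a ^ 2 := by nlinarith
      exact lt_of_mul_lt_mul_left (by linarith) hn.le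
    have h3 : (s.x : ℝ) < a := by exact_mod_cast hlt
    have h4 : ((|s.y| : ℤ) : ℝ) < b := by exact_mod_cast h2
    have h5 := mul_le_mul_of_nonneg_right h4.le (Real.sqrt_nonneg (n : ℝ))
    linarith

theorem dvd_of_sq_mul_squarefree {n y t m : ℤ} (hn : Squarefree n) (ht : t ≠ 0)
    (h : y ^ 2 * n = t ^ 2 * m) : t ∣ y := by
  obtain ⟨g, t', y', hcop, rfl, rfl⟩ : ∃ g t' y' : ℤ, IsCoprime t' y' ∧ t = g * t' ∧ y = g * y' := by
    obtain ⟨t', y', hc, h1, h2⟩ := Int.exists_gcd_one (Int.gcd_pos_of_ne_zero_left y ht)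
    exact ⟨_, t', y', Int.isCoprime_iff_gcd_eq_one.mpr hc, by rw [mul_comm, ← h1],
      by rw [mul_comm, ← h2]⟩
  have hg : g ≠ 0 := left_ne_zero_of_mul ht
  have h1 : y' ^ 2 * n = t' ^ 2 * m := by
    apply mul_left_cancel₀ (pow_ne_zero 2 hg); linear_combination h
  have h2 : t' ^ 2 ∣ n := (hcop.pow (m := 2) (n := 2)).dvd_of_dvd_mul_left ⟨m, h1⟩
  have h3 : IsUnit t' := hn t' (by rwa [← sq])
  exact mul_dvd_mul_left g h3.dvd

/-- An element `θ / t` of norm `1` with a power equal to `± ε` is half of an element `ζ` of `ℤ√n`: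
it is integral over `ℤ`, hence has integral trace, and `n` is squarefree. -/
theorem exists_half_integers {n : ℤ} (hn : 0 < n) (hsf : Squarefree n) {ε θ : ℤ√n} {t : ℤ}
    (ht : t ≠ 0) (hθ : θ.re ^ 2 - n * θ.im ^ 2 = t ^ 2) {e : ℕ} (he : 0 < e)
    (h : (t : ℤ√n) ^ (2 * e) * ε ^ 2 = θ ^ (2 * e)) :
    ∃ ζ : ℤ√n, ζ.re ^ 2 - n * ζ.im ^ 2 = 4 ∧ (2 : ℤ√n) ^ (2 * e) * ε ^ 2 = ζ ^ (2 * e) := by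
  have htR : (t : ℝ) ≠ 0 := by exact_mod_cast ht
  -- Both real embeddings are needed, to get an integral trace.
  have key : ∀ s : ℝ, s * s = n → IsIntegral ℤ (((θ.re : ℝ) + θ.im * s) / t) := by
    intro s hs
    let φ : ℤ√n →+* ℝ := Zsqrtd.lift ⟨s, by simpa using hs⟩
    have hφ : ∀ z : ℤ√n, φ z = z.re + z.im * s := fun z => rfl
    have hsI : IsIntegral ℤ s := by
      refine IsIntegral.of_pow (n := 2) two_pos ?_
      rw [sq, hs]
      exact isIntegral_algebraMap (R := ℤ) (A := ℝ) (x := n)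
    have hI : IsIntegral ℤ (φ (ε ^ 2)) := by
      rw [hφ]
      exact (isIntegral_algebraMap (R := ℤ) (A := ℝ) (x := _)).add
        ((isIntegral_algebraMap (R := ℤ) (A := ℝ) (x := _)).mul hsI)
    refine IsIntegral.of_pow (n := 2 * e) (by omega) ?_
    have h' := congrArg φ h
    rw [map_mul, map_pow, map_pow φ θ, map_intCast, hφ θ] at h'
    rwa [div_pow, ← h', mul_div_cancel_left₀ _ (pow_ne_zero _ htR)]
  have hs := Real.mul_self_sqrt (show (0 : ℝ) ≤ n by exact_mod_cast hn.le)
  have hint := (key _ hs).add (key (-Real.sqrt n) (by linarith))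
  obtain ⟨x, hx⟩ : ∃ x : ℤ, t * x = 2 * θ.re := by
    have hq : IsIntegral ℤ ((2 * θ.re / t : ℚ)) := by
      rw [← isIntegral_algebraMap_iff (algebraMap ℚ ℝ).injective]
      have heq : algebraMap ℚ ℝ (2 * θ.re / t) =
          (θ.re + θ.im * Real.sqrt n) / t + (θ.re + θ.im * -Real.sqrt n) / t := by
        rw [eq_ratCast]
        push_cast
        ring
      rwa [heq]
    obtain ⟨x, hx⟩ := IsIntegrallyClosed.isIntegral_iff.mp hq
    refine ⟨x, ?_⟩
    have htQ : (t : ℚ) ≠ 0 := by exact_mod_cast ht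
    simp only [algebraMap_int_eq, eq_intCast] at hx
    rw [eq_div_iff htQ] at hx
    have : x * t = 2 * θ.re := by exact_mod_cast hx
    linarith
  obtain ⟨y, hy⟩ : t ∣ 2 * θ.im :=
    dvd_of_sq_mul_squarefree (m := x ^ 2 - 4) hsf ht (by
      linear_combination (-4) * hθ - (t * x + 2 * θ.re) * hx)
  refine ⟨⟨x, y⟩, ?_, ?_⟩
  · apply mul_left_cancel₀ (pow_ne_zero 2 ht)
    show t ^ 2 * (x ^ 2 - n * y ^ 2) = _
    linear_combination 4 * hθ + (t * x + 2 * θ.re) * hx + n * (t * y + 2 * θ.im) * hy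
  · have h2 : (t : ℤ√n) * ⟨x, y⟩ = 2 * θ := by
      ext <;> simp [hx, hy]
    have ht2 : t ^ (2 * e) ≠ 0 := pow_ne_zero _ ht
    apply Zsqrtd.eq_of_smul_eq_smul_left ht2
    push_cast
    rw [← mul_pow, h2, mul_pow, ← h]
    ring

theorem exponent_dvd {n : ℤ} {s w : Pell.Solution₁ n} (hs : Pell.IsFundamental s) {e i : ℕ}
    (h : s ^ (2 * i) = w ^ (2 * e)) : e ∣ i := by
  obtain ⟨j, hj⟩ := hs.eq_zpow_or_neg_zpow w
  have hw : w ^ 2 = s ^ (2 * j) := by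
    rcases hj with rfl | rfl
    · rw [← zpow_natCast, ← zpow_mul, mul_comm]; rfl
    · rw [neg_sq, ← zpow_natCast, ← zpow_mul, mul_comm]; rfl
  have h2 : s ^ (2 * (i : ℤ) - 2 * j * e) = 1 := by
    rw [zpow_sub, mul_inv_eq_one, zpow_mul s (2 * j), zpow_natCast, ← hw, ← pow_mul, ← h,
      ← zpow_natCast]
    norm_cast
  have h3 := (hs.zpow_eq_one_iff _).mp h2
  have : (e : ℤ) ∣ i := ⟨j, by linarith⟩
  exact_mod_cast this

/-- Here `ζ / 2` has norm `1` and some power of it is `± s`. Then it, or its cube if `ζ` is not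
divisible by `2`, lies in the group of Pell solutions generated by `s` and `-1`. -/
theorem exponent_eq {n : ℤ} (hsf : Squarefree n) {s : Pell.Solution₁ n}
    (hs : Pell.IsFundamental s) {ζ : ℤ√n} {e : ℕ} (hζ : ζ.re ^ 2 - n * ζ.im ^ 2 = 4)
    (h : (2 : ℤ√n) ^ (2 * e) * (s : ℤ√n) ^ 2 = ζ ^ (2 * e)) :
    e = 1 ∨ (e = 3 ∧ n % 4 = 1) := by
  have hn4 : n % 4 ≠ 0 := by
    intro h0
    have := hsf 2 (by norm_num; omega)
    norm_num [Int.isUnit_iff] at this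
  obtain ⟨x, y⟩ := ζ
  simp only at hζ
  have hcases : (∃ x' y', x = 2 * x' ∧ y = 2 * y') ∨
      (∃ y' n', y = 2 * y' + 1 ∧ n = 4 * n' + 1) := by
    rcases Int.even_or_odd' x with ⟨x', rfl | rfl⟩ <;>
      rcases Int.even_or_odd' y with ⟨y', rfl | rfl⟩
    · exact .inl ⟨x', y', rfl, rfl⟩
    · exfalso
      ring_nf at hζ
      apply hn4
      have : n = 4 * (x' ^ 2 - 1 - n * y' - n * y' ^ 2) := by linarith
      omega
    · exfalso
      ring_nf at hζ
      have : 1 = 4 * (1 - x' - x' ^ 2 + n * y' ^ 2) := by linarith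
      omega
    · refine .inr ⟨y', x' + x' ^ 2 - 1 - n * y' - n * y' ^ 2, rfl, ?_⟩
      ring_nf at hζ ⊢
      linarith
  rcases hcases with ⟨x, y, rfl, rfl⟩ | ⟨y', n', hy', hn'⟩
  · left
    let w : Pell.Solution₁ n := Pell.Solution₁.mk x y (by linarith)
    have hw : (⟨2 * x, 2 * y⟩ : ℤ√n) = 2 * (w : ℤ√n) := by
      ext <;> simp [w]
    rw [hw, mul_pow] at h
    have h2 : (s : ℤ√n) ^ 2 = (w : ℤ√n) ^ (2 * e) := by
      apply Zsqrtd.eq_of_smul_eq_smul_left (a := 2 ^ (2 * e)) (by positivity)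
      exact_mod_cast h
    have : e ∣ 1 := exponent_dvd hs (w := w) (by
      apply Subtype.ext; exact h2)
    simpa using this
  · have hev : ∃ v, n * y ^ 2 + 1 = 2 * v :=
      ⟨2 * n' * y ^ 2 + 2 * y' ^ 2 + 2 * y' + 1, by rw [hn', hy']; ring⟩
    obtain ⟨v, hv⟩ := hev
    -- `w` is the cube of `(x + y √n) / 2`, rewritten by means of `x² = n y² + 4`.
    let w : Pell.Solution₁ n := Pell.Solution₁.mk (x * v) (y * (v + 1)) (by
      have hx2 : x ^ 2 = 2 * v + 3 := by linarith
      have : n * y ^ 2 = 2 * v - 1 := by linarith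
      linear_combination v ^ 2 * hx2 - (v + 1) ^ 2 * this)
    have hw : (⟨x, y⟩ : ℤ√n) ^ 3 = 8 * (w : ℤ√n) := by
      ext
      · simp [w, pow_succ]
        linear_combination x * hζ + 4 * x * hv
      · simp [w, pow_succ]
        linear_combination 3 * y * hζ + 4 * y * hv
    have h2 : (s : ℤ√n) ^ (2 * 3) = (w : ℤ√n) ^ (2 * e) := by
      apply Zsqrtd.eq_of_smul_eq_smul_left (a := 2 ^ (6 * e)) (by positivity)
      have h8 : (2 : ℤ√n) ^ (6 * e) = 8 ^ (2 * e) := by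
        rw [show 6 * e = 3 * (2 * e) by ring, pow_mul]; norm_num
      push_cast
      have h3 := congrArg (· ^ 3) h
      simp only [← pow_mul, mul_pow] at h3
      calc (2 : ℤ√n) ^ (6 * e) * (s : ℤ√n) ^ (2 * 3)
          = (2 : ℤ√n) ^ (2 * e * 3) * (s : ℤ√n) ^ (2 * 3) := by ring
        _ = (⟨x, y⟩ : ℤ√n) ^ (2 * e * 3) := h3
        _ = ((⟨x, y⟩ : ℤ√n) ^ 3) ^ (2 * e) := by rw [← pow_mul, mul_comm 3]
        _ = 2 ^ (6 * e) * (w : ℤ√n) ^ (2 * e) := by rw [hw, mul_pow, h8]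
    have h3 : e ∣ 3 := exponent_dvd hs (w := w) (by
      apply Subtype.ext; exact h2)
    rcases (Nat.dvd_prime Nat.prime_three).mp h3 with h3 | h3
    · exact .inl h3
    · exact .inr ⟨h3, by omega⟩

/-- The leading coefficient of `D` is a square `k²`, and `P' = k d Q` for a suitable sign of `k`. -/
theorem exists_derivative_eq {P Q D : ℤ[X]} {d : ℕ} (hD : D.natDegree = 2)
    (hP : P.natDegree = d) (hd : 1 ≤ d) (h : P ^ 2 - D * Q ^ 2 = 1) :
    ∃ k : ℤ, D.coeff 2 = k ^ 2 ∧ derivative P = C (k * d) * Q := by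
  have hD0 : D ≠ 0 := by rintro rfl; simp at hD
  have hPne : P ≠ 0 := by rintro rfl; simp at hP; omega
  have hPD : P ^ 2 = D * Q ^ 2 + C 1 := by rw [C_1, ← h]; ring
  have hQ : Q ≠ 0 := by
    rintro rfl
    have := congrArg natDegree hPD
    rw [natDegree_pow, hP] at this
    simp at this
    omega
  have hdQ : Q.natDegree + 1 = d := by
    have := congrArg natDegree hPD
    rw [natDegree_add_C, natDegree_mul hD0 (pow_ne_zero 2 hQ), natDegree_pow, natDegree_pow] at this
    omega
  have hlead : P.leadingCoeff ^ 2 = D.leadingCoeff * Q.leadingCoeff ^ 2 := by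
    rw [← leadingCoeff_pow, ← leadingCoeff_pow, ← leadingCoeff_mul, hPD]
    apply leadingCoeff_add_of_degree_lt'
    apply degree_lt_degree
    rw [natDegree_C, natDegree_mul hD0 (pow_ne_zero 2 hQ)]
    omega
  have hder := congrArg derivative hPD
  simp only [derivative_pow, derivative_add, derivative_mul, derivative_C] at hder
  norm_num at hder
  have hcop : IsCoprime Q P := ⟨-(D * Q), P, by rw [← h]; ring⟩
  obtain ⟨S, hS⟩ : Q ∣ 2 * derivative P :=
    hcop.dvd_of_dvd_mul_left ⟨derivative D * Q + 2 * D * derivative Q, by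
      linear_combination hder⟩
  have hP'd : (derivative P).natDegree = d - 1 := by
    rw [natDegree_derivative, hP]
  have hP'ne : derivative P ≠ 0 := by
    intro h0
    have := derivative_eq_zero.mp h0
    omega
  have hSne : S ≠ 0 := by rintro rfl; simp [hP'ne] at hS
  have hSd : S.natDegree = 0 := by
    have := congrArg natDegree hS
    rw [natDegree_mul hQ hSne, natDegree_mul two_ne_zero hP'ne, hP'd, natDegree_ofNat] at this
    omega
  obtain ⟨s, rfl⟩ : ∃ s, S = C s := ⟨_, eq_C_of_natDegree_eq_zero hSd⟩
  have hq : Q.leadingCoeff ≠ 0 := leadingCoeff_ne_zero.mpr hQ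
  have hsc : 2 * (P.leadingCoeff * d) = Q.leadingCoeff * s := by
    have := congrArg (fun p => coeff p Q.natDegree) hS
    simp only [coeff_mul_C, coeff_ofNat_mul, coeff_derivative] at this
    rw [hdQ, ← hP, coeff_natDegree, coeff_natDegree] at this
    rw [← this, ← hdQ]; push_cast; ring
  have hs2 : s ^ 2 = (2 * d : ℤ) ^ 2 * D.leadingCoeff := by
    apply mul_left_cancel₀ (pow_ne_zero 2 hq)
    linear_combination (-(Q.leadingCoeff * s) - 2 * (P.leadingCoeff * d)) * hsc
      + (2 * d : ℤ) ^ 2 * hlead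
  have hd0 : (2 * d : ℤ) ≠ 0 := by omega
  obtain ⟨k, rfl⟩ : (2 * d : ℤ) ∣ s := (Int.pow_dvd_pow_iff two_ne_zero).mp ⟨_, hs2⟩
  refine ⟨k, ?_, ?_⟩
  · rw [show D.coeff 2 = D.leadingCoeff by rw [leadingCoeff, hD]]
    apply mul_left_cancel₀ (pow_ne_zero 2 hd0)
    linear_combination -hs2
  · apply mul_left_cancel₀ (two_ne_zero : (2 : ℤ[X]) ≠ 0)
    rw [hS]
    simp only [C_mul, C_ofNat]
    ring

/-- From `Δ ^ d ε = r θ ^ d` with `r² = Δ ^ d`, that is `ε = ± (θ / √Δ) ^ d`, one gets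
`ε = ± (ψ / t) ^ e` with integral `t`, stated after squaring: for odd `d`, `Δ` is a square; for
even `d`, take `ψ = θ²` and `t = Δ`. -/
theorem odd_or_two_mul {n : ℤ} {ε θ : ℤ√n} {Δ r : ℤ} {d : ℕ} (hd : 1 ≤ d) (hΔ : Δ ≠ 0)
    (hθ : θ.re ^ 2 - n * θ.im ^ 2 = Δ) (hr : r ^ 2 = Δ ^ d)
    (h : ((Δ ^ d : ℤ) : ℤ√n) * ε = r * θ ^ d) :
    ∃ (e : ℕ) (t : ℤ) (ψ : ℤ√n), 0 < e ∧ (d = e ∨ d = 2 * e) ∧ t ≠ 0 ∧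
      ψ.re ^ 2 - n * ψ.im ^ 2 = t ^ 2 ∧ (t : ℤ√n) ^ (2 * e) * ε ^ 2 = ψ ^ (2 * e) := by
  have hsq : (Δ : ℤ√n) ^ d * ε ^ 2 = θ ^ (2 * d) := by
    apply Zsqrtd.eq_of_smul_eq_smul_left (pow_ne_zero d hΔ)
    have hr' : (r : ℤ√n) ^ 2 = ((Δ ^ d : ℤ) : ℤ√n) := by exact_mod_cast hr
    have h2 := congrArg (· ^ 2) h
    simp only [mul_pow, hr'] at h2
    push_cast at h2 ⊢
    linear_combination h2
  rcases Nat.even_or_odd' d with ⟨e, rfl | rfl⟩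
  · refine ⟨e, Δ, θ ^ 2, by omega, .inr rfl, hΔ, ?_, ?_⟩
    · rw [← hθ]; simp [sq]; ring
    · rw [hsq, ← pow_mul]
  · obtain ⟨t, rfl⟩ : Δ ^ e ∣ r := (Int.pow_dvd_pow_iff two_ne_zero).mp ⟨Δ, by rw [hr]; ring⟩
    have ht : Δ = t ^ 2 := by
      apply mul_left_cancel₀ (pow_ne_zero 2 (pow_ne_zero e hΔ))
      linear_combination -hr
    refine ⟨2 * e + 1, t, θ, by omega, .inl rfl, ?_, by rw [hθ, ht], ?_⟩
    · rintro rfl; simp at ht; exact hΔ ht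
    · rw [← hsq, ht]; push_cast; ring

theorem stmt_12 (n : ℕ) (hn : 0 < n) (hsf : Squarefree n) (hns : ¬ IsSquare n)
    (a b : ℤ) (hfund : IsFundamentalSolution (n : ℤ) a b)
    (P Q D : ℤ[X]) (d : ℕ) (hD : D.natDegree = 2) (hP : P.natDegree = d) (hd : 1 ≤ d)
    (hPell : P ^ 2 - D * Q ^ 2 = 1)
    (hP0 : P.eval 0 = a) (hQ0 : Q.eval 0 = b) (hD0 : D.eval 0 = (n : ℤ)) :
    d ≤ 6 ∧
      ((n % 4 = 2 ∨ n % 4 = 3) → (d = 1 ∨ d = 2)) ∧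
      (n % 4 = 1 → (d = 1 ∨ d = 2 ∨ d = 3 ∨ d = 6)) := by
  have hnZ : (0 : ℤ) < n := by exact_mod_cast hn
  have hsfZ : Squarefree (n : ℤ) := Int.squarefree_natCast.mpr hsf
  obtain ⟨k, hk, hP'⟩ := exists_derivative_eq hD hP hd hPell
  have hDne : D ≠ 0 := by rintro rfl; simp at hD
  have hk0 : k ≠ 0 := by
    rintro rfl
    apply hDne
    rw [← leadingCoeff_eq_zero, leadingCoeff, hD, hk]
    norm_num
  have hQne : Q ≠ 0 := by
    rintro rfl
    have : P.natDegree = 0 := derivative_eq_zero.mp (by simpa using hP')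
    omega
  set B := D.coeff 1 with hB
  have hDq : D = C (k ^ 2) * X ^ 2 + C B * X + C (n : ℤ) := by
    conv_lhs => rw [eq_quadratic_of_degree_le_two (natDegree_le_iff_degree_le.mp hD.le)]
    rw [hk, coeff_zero_eq_eval_zero, hD0]
  have hDer : derivative D = C (2 * k ^ 2) * X + C B := by
    rw [hDq]
    simp only [derivative_add, derivative_C_mul_X_pow, derivative_C_mul_X, derivative_C]
    norm_num [mul_comm]
  have hDer0 : (derivative D).eval 0 = B := by rw [hDer]; simp
  have hQ' : C (2 * k * d) * P = derivative D * Q + 2 * D * derivative Q := by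
    apply mul_left_cancel₀ hQne
    have := congrArg derivative hPell
    simp only [derivative_sub, derivative_pow, derivative_mul, derivative_one, hP'] at this
    norm_num at this
    simp only [eq_intCast, Int.cast_mul, Int.cast_natCast, Int.cast_ofNat]
    linear_combination this
  have hΔ : derivative D ^ 2 - C (4 * k ^ 2) * D = C (B ^ 2 - 4 * k ^ 2 * n) := by
    rw [hDer, hDq]; simp; ring
  obtain ⟨r, hr, hE⟩ := descent hD (by rw [hDer]; simp) hΔ hD0 d P Q 1 (by simpa using hPell) hP' hQ'
  rw [hP0, hQ0, hDer0] at hE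
  have hΔ0 : B ^ 2 - 4 * k ^ 2 * n ≠ 0 := by
    intro h0
    apply hns
    obtain ⟨c, hc⟩ : 2 * k ∣ B :=
      (Int.pow_dvd_pow_iff two_ne_zero).mp ⟨(n : ℤ), by linear_combination h0⟩
    have : (n : ℤ) = c * c := by
      apply mul_left_cancel₀ (pow_ne_zero 2 (mul_ne_zero two_ne_zero hk0))
      rw [hc] at h0
      linear_combination -h0
    exact Int.isSquare_natCast_iff.mp ⟨c, this⟩
  obtain ⟨e, t, ψ, he, hde, ht, hψ, hpow⟩ :=
    odd_or_two_mul hd hΔ0 (θ := ⟨B, 2 * k⟩) (by ring) (by rw [hr]; ring) hE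
  obtain ⟨ζ, hζ, hζpow⟩ := exists_half_integers hnZ hsfZ ht hψ he hpow
  have hfin := exponent_eq hsfZ (isFundamental_mk hnZ hfund) hζ hζpow
  omega
end

section
/- Let n be a positive integer which is not a square and let u, v ∈ ℚ with v ≠ 0 and u² − n·v² = 1. Then the polynomials P₁ = v⁴·(u+1)·X² + 2·v²·(u+1)·X + u, Q₁ = v³·X + v, and D = (u+1)²·v²·X² + 2·(u+1)²·X + n in ℚ[X] satisfy P₁² − D·Q₁² = 1, P₁(0) = u, Q₁(0) = v and D(0) = n. -/
open Polynomial

theorem stmt_14 (n : ℕ) (hn : 0 < n) (hns : ¬ IsSquare n)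
    (u v : ℚ) (hv : v ≠ 0) (huv : u ^ 2 - (n : ℚ) * v ^ 2 = 1)
    (P₁ Q₁ D : ℚ[X])
    (hP₁ : P₁ = C (v ^ 4 * (u + 1)) * X ^ 2 + C (2 * v ^ 2 * (u + 1)) * X + C u)
    (hQ₁ : Q₁ = C (v ^ 3) * X + C v)
    (hD : D = C ((u + 1) ^ 2 * v ^ 2) * X ^ 2 + C (2 * (u + 1) ^ 2) * X + C (n : ℚ)) :
    P₁ ^ 2 - D * Q₁ ^ 2 = 1 ∧ P₁.eval 0 = u ∧ Q₁.eval 0 = v ∧ D.eval 0 = (n : ℚ) := by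
  subst hP₁ hQ₁ hD
  refine ⟨?_, by simp, by simp, by simp⟩
  have h : (C u : ℚ[X]) ^ 2 - C (n : ℚ) * C v ^ 2 = 1 := by
    rw [← C_pow, ← C_pow, ← C_mul, ← C_sub, huv, C_1]
  simp only [C_mul, C_add, C_pow, C_1, show (C (2 : ℚ) : ℚ[X]) = 2 from rfl]
  -- With `s = v² X + 1`, one has `P₁ = (u + 1) s² - 1`, `Q₁ = v s` and, by the Pell equation,
  -- `v² D = (u + 1)² s² - 2 (u + 1)`; so `P₁² - D Q₁² - 1` is `s²` times the Pell relation.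
  linear_combination (C v ^ 2 * X + 1) ^ 2 * h
end
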